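/- Elliptic Harnack inequality: for all p, q ∈ (1,∞) with 1/p + 1/q < 2/d there exist positive constants c₁, c₂ and κ, depending only on d, p, q, C_reg and C_riso, such that for every choice of edge weights ω, every x₀ ∈ V, every n ≥ 1 and every function u : V → (0,∞) that is harmonic on B(x₀,n), one has u(x) ≤ c₁·exp(c₂·(max{1, ‖μ^ω‖_{p,B(x₀,n)}·‖ν^ω‖_{q,B(x₀,n)}})^κ)·u(y) for all x, y ∈ B(x₀, n/2). -/

import Mathlib

open Finset MeasureTheory
open scoped ENNReal

noncomputable section

namespace RCM

variable {V : Type*}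

/-- `μ^ω(x)`, the sum of the weights of edges incident to `x`. -/
def mu (nbr : V → Finset V) (ω : V → V → ℝ) (x : V) : ℝ := ∑ y ∈ nbr x, ω x y

/-- `ν^ω(x)`, the sum of the reciprocals of the weights of edges incident to `x`. -/
def nu (nbr : V → Finset V) (ω : V → V → ℝ) (x : V) : ℝ := ∑ y ∈ nbr x, (ω x y)⁻¹

/-- `(L_Y^ω f)(x)`. -/
def lap (nbr : V → Finset V) (ω : V → V → ℝ) (f : V → ℝ) (x : V) : ℝ :=
  (mu nbr ω x)⁻¹ * ∑ y ∈ nbr x, ω x y * (f y - f x)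

/-- space-averaged norm `‖f‖_{p,A}` for a real exponent `p`. -/
def nrm (A : Finset V) (p : ℝ) (f : V → ℝ) : ℝ :=
  ((A.card : ℝ)⁻¹ * ∑ x ∈ A, |f x| ^ p) ^ (1 / p)

/-- weighted space-averaged norm `‖f‖_{p,A,φ}` for a real exponent `p`. -/
def nrmW (A : Finset V) (p : ℝ) (φ : V → ℝ) (f : V → ℝ) : ℝ :=
  ((A.card : ℝ)⁻¹ * ∑ x ∈ A, |f x| ^ p * φ x) ^ (1 / p)

/-- space-averaged norm `‖f‖_{p,A}` for an extended exponent `p ∈ (0,∞]`;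
for `p = ∞` this is the maximum of `|f|` over `A`. -/
def nrmE (A : Finset V) (p : ℝ≥0∞) (f : V → ℝ) : ℝ :=
  if p = ⊤ then sSup ((fun x => |f x|) '' (A : Set V)) else nrm A p.toReal f

/-- weighted average `(u)_{A,π}`. -/
def wavg (A : Finset V) (π : V → ℝ) (u : V → ℝ) : ℝ :=
  (∑ x ∈ A, π x * u x) / ∑ x ∈ A, π x

open Classical in
/-- relative internal boundary `∂_B A`. -/
def relBdry (G : SimpleGraph V) (B A : Finset V) : Finset V :=
  A.filter fun z => ∃ y ∈ B, y ∉ A ∧ G.Adj z y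

open Classical in
/-- internal boundary `∂B`. -/
def intBdry (G : SimpleGraph V) (B : Finset V) : Finset V :=
  B.filter fun z => ∃ y, y ∉ B ∧ G.Adj z y

open Classical in
/-- Dirichlet sum `Σ_{x,y ∈ B, x∼y} ω(x,y) (u(x)-u(y))²`. -/
def dSum (G : SimpleGraph V) (ω : V → V → ℝ) (B : Finset V) (u : V → ℝ) : ℝ :=
  ∑ x ∈ B, ∑ y ∈ B, if G.Adj x y then ω x y * (u x - u y) ^ 2 else 0

/-- `E^ω_{η²}(u) = (1/2) Σ_{x,y} η(x)² ω(x,y) (u(y)-u(x))²`. -/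
def energySq (ω : V → V → ℝ) (η u : V → ℝ) : ℝ :=
  (1 / 2) * ∑' x, ∑' y, η x ^ 2 * ω x y * (u y - u x) ^ 2

/-- `E^{ω,η}(u) = (1/2) Σ_{x,y} min(η(x)²,η(y)²) ω(x,y) (u(y)-u(x))²`. -/
def energyMin (ω : V → V → ℝ) (η u : V → ℝ) : ℝ :=
  (1 / 2) * ∑' x, ∑' y, min (η x ^ 2) (η y ^ 2) * ω x y * (u y - u x) ^ 2

/-- `‖∇η‖_{ℓ∞(E)}`, the supremum of `|η(y)-η(x)|` over edges `{x,y}`. -/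
def gradSup (G : SimpleGraph V) (η : V → ℝ) : ℝ :=
  sSup {r : ℝ | ∃ x y, G.Adj x y ∧ r = |η y - η x|}

/-- `u` is caloric on `I × B`: `∂_t u = L_Y^ω u` on `I × B`. -/
def Caloric (nbr : V → Finset V) (ω : V → V → ℝ) (I : Set ℝ) (B : Set V)
    (u : ℝ → V → ℝ) : Prop :=
  ∀ x ∈ B, ∀ t ∈ I, HasDerivAt (fun s => u s x) (lap nbr ω (u t) x) t

/-- `u` is sub-caloric on `I × B`: `∂_t u ≤ L_Y^ω u` on `I × B`. -/
def SubCaloric (nbr : V → Finset V) (ω : V → V → ℝ) (I : Set ℝ) (B : Set V)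
    (u : ℝ → V → ℝ) : Prop :=
  ∀ x ∈ B, ∀ t ∈ I, ∃ d, HasDerivAt (fun s => u s x) d t ∧ d ≤ lap nbr ω (u t) x

/-- `u` is super-caloric on `I × B`: `∂_t u ≥ L_Y^ω u` on `I × B`. -/
def SuperCaloric (nbr : V → Finset V) (ω : V → V → ℝ) (I : Set ℝ) (B : Set V)
    (u : ℝ → V → ℝ) : Prop :=
  ∀ x ∈ B, ∀ t ∈ I, ∃ d, HasDerivAt (fun s => u s x) d t ∧ lap nbr ω (u t) x ≤ d

/-- space-time norm `‖u‖_{p,[a,b]×B,φ}`. -/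
def nrmST (a b : ℝ) (B : Finset V) (p : ℝ) (φ : V → ℝ) (u : ℝ → V → ℝ) : ℝ :=
  ((b - a)⁻¹ * ∫ t in a..b, nrmW B p φ (u t) ^ p) ^ (1 / p)

end RCM

/-!
Testing harmonicity of `u` with `η ^ 2 * u ^ (2 * α - 1)` bounds the Dirichlet energy of
`η * u ^ α` as long as `α` stays away from `1 / 2`. Combined with a Sobolev inequality for the
degenerate weights, which follows from the isoperimetric inequality and Hölder's inequality, this
improves the integrability of powers of `u`, positive or negative: sums of `u ^ (2 * α * p')` over a
ball control sums of `u ^ (2 * α * ρ)` over a smaller ball, and `p' < ρ` is exactly the condition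
`1 / p + 1 / q < 2 / d`. Moser iteration then bounds powers of `u` and `u⁻¹` pointwise by their
averages.

The averages of positive and of negative powers are linked through `log u`. Testing with
`η ^ 2 * u⁻¹` and the Poincaré inequality show that `log u` has mean oscillation of the order of the
contrast `max 1 (‖μ‖_p ‖ν‖_q)` around some constant `a`. As in the argument of Bombieri and Giusti,
this oscillation bound and the Moser bound for small exponents improve any large upper bound for
`±(log u - a)` by the factor `3 / 4` on a slightly smaller ball, and iterating bounds
`|log u - a|` by a power of the contrast. On balls of bounded radius the inequality follows by
comparing `u` at neighbouring vertices along geodesics.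
-/

namespace EllipticHarnack

open RCM

/-! ### Increments of powers and logarithms -/

-- Cauchy–Schwarz for `∫ f'` without integrals: with `c` the slope of `f` between the endpoints,
-- `F - 2 c f + c² id` has the nonnegative derivative `(f' - c)²`.
lemma sq_sub_le_mul_sub_of_hasDerivAt {f f' F : ℝ → ℝ} {a b : ℝ} (hab : a ≤ b)
    (hf : ∀ t ∈ Set.Icc a b, HasDerivAt f (f' t) t)
    (hF : ∀ t ∈ Set.Icc a b, HasDerivAt F (f' t ^ 2) t) :
    (f b - f a) ^ 2 ≤ (F b - F a) * (b - a) := by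
  rcases hab.eq_or_lt with rfl | hlt
  · simp
  set c := (f b - f a) / (b - a)
  have hg : ∀ t ∈ Set.Icc a b,
      HasDerivAt (fun t => F t - 2 * c * f t + c ^ 2 * t) ((f' t - c) ^ 2) t := fun t ht =>
    (((hF t ht).sub ((hf t ht).const_mul (2 * c))).add
      ((hasDerivAt_id t).const_mul (c ^ 2))).congr_deriv (by ring)
  have hmono : MonotoneOn (fun t => F t - 2 * c * f t + c ^ 2 * t) (Set.Icc a b) := by
    refine monotoneOn_of_deriv_nonneg (convex_Icc a b)
      (fun t ht => (hg t ht).continuousAt.continuousWithinAt) ?_ ?_ <;>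
    intro t ht <;> have h := hg t (interior_subset ht)
    · exact h.differentiableAt.differentiableWithinAt
    · rw [h.deriv]; positivity
  have hslope : c * (b - a) = f b - f a := div_mul_cancel₀ _ (sub_pos.2 hlt).ne'
  have hends : F a - 2 * c * f a + c ^ 2 * a ≤ F b - 2 * c * f b + c ^ 2 * b :=
    hmono (Set.left_mem_Icc.2 hab) (Set.right_mem_Icc.2 hab) hab
  calc (f b - f a) ^ 2 = (2 * c * (f b - f a) - c * (c * (b - a))) * (b - a) := by
        rw [← hslope]; ring
    _ ≤ (F b - F a) * (b - a) :=
        mul_le_mul_of_nonneg_right (by linarith) (sub_nonneg.2 hab)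

lemma sq_rpow_sub_rpow_le {a b α : ℝ} (ha : 0 < a) (hb : 0 < b) (hα : 2 * α - 1 ≠ 0) :
    (a ^ α - b ^ α) ^ 2 ≤
      α ^ 2 * ((a ^ (2 * α - 1) - b ^ (2 * α - 1)) * (a - b) / (2 * α - 1)) := by
  wlog hab : b ≤ a generalizing a b
  · convert this hb ha (le_of_not_ge hab) using 1 <;> ring
  have hpos : ∀ t ∈ Set.Icc b a, t ≠ 0 := fun t ht => (hb.trans_le ht.1).ne'
  refine (sq_sub_le_mul_sub_of_hasDerivAt (f := (· ^ α)) (f' := fun t => α * t ^ (α - 1))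
    (F := fun t => α ^ 2 / (2 * α - 1) * t ^ (2 * α - 1)) hab
    (fun t ht => Real.hasDerivAt_rpow_const (.inl (hpos t ht))) fun t ht => ?_).trans_eq (by ring)
  refine ((Real.hasDerivAt_rpow_const (.inl (hpos t ht))).const_mul _).congr_deriv ?_
  rw [mul_pow, ← Real.rpow_mul_natCast (hb.trans_le ht.1).le,
    show (α - 1) * (2 : ℕ) = 2 * α - 1 - 1 by push_cast; ring, ← mul_assoc,
    div_mul_cancel₀ _ hα]

lemma sq_log_sub_log_le {a b : ℝ} (ha : 0 < a) (hb : 0 < b) :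
    (Real.log a - Real.log b) ^ 2 ≤ (b⁻¹ - a⁻¹) * (a - b) := by
  wlog hab : b ≤ a generalizing a b
  · convert this hb ha (le_of_not_ge hab) using 1 <;> ring
  have hpos : ∀ t ∈ Set.Icc b a, t ≠ 0 := fun t ht => (hb.trans_le ht.1).ne'
  refine (sq_sub_le_mul_sub_of_hasDerivAt (F := fun t => -t⁻¹) hab
    (fun t ht => Real.hasDerivAt_log (hpos t ht)) fun t ht => ?_).trans_eq (by ring)
  exact (hasDerivAt_inv (hpos t ht)).neg.congr_deriv (by rw [neg_neg, inv_pow])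

lemma exists_rpow_sub_rpow_eq {a b : ℝ} (ha : 0 < a) (hb : 0 < b) (γ : ℝ) :
    ∃ t ∈ Set.uIcc a b, a ^ γ - b ^ γ = γ * t ^ (γ - 1) * (a - b) := by
  wlog hab : b < a generalizing a b
  · rcases (not_lt.1 hab).eq_or_lt with rfl | hlt
    · exact ⟨a, Set.left_mem_uIcc, by ring⟩
    · obtain ⟨t, ht, h⟩ := this hb ha hlt
      exact ⟨t, Set.uIcc_comm a b ▸ ht, by linarith⟩
  have hderiv : ∀ t ∈ Set.Icc b a, HasDerivAt (fun t : ℝ => t ^ γ) (γ * t ^ (γ - 1)) t :=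
    fun t ht => Real.hasDerivAt_rpow_const (.inl (hb.trans_le ht.1).ne')
  obtain ⟨t, ht, h⟩ := exists_hasDerivAt_eq_slope _ _ hab
    (fun t ht => (hderiv t ht).continuousAt.continuousWithinAt)
    fun t ht => hderiv t (Set.Ioo_subset_Icc_self ht)
  refine ⟨t, Set.Icc_subset_uIcc' (Set.Ioo_subset_Icc_self ht), ?_⟩
  rw [h, div_mul_cancel₀ _ (sub_pos.2 hab).ne']

lemma min_rpow_le_rpow {a b t : ℝ} (ha : 0 < a) (hb : 0 < b) (ht : t ∈ Set.uIcc a b) (γ : ℝ) :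
    min (a ^ γ) (b ^ γ) ≤ t ^ γ := by
  wlog hab : a ≤ b generalizing a b
  · rw [min_comm]; exact this hb ha (Set.uIcc_comm a b ▸ ht) (le_of_not_ge hab)
  rw [Set.uIcc_of_le hab] at ht
  rcases le_total 0 γ with hγ | hγ
  · exact (min_le_left _ _).trans (Real.rpow_le_rpow ha.le ht.1 hγ)
  · exact (min_le_right _ _).trans (Real.rpow_le_rpow_of_nonpos (ha.trans_le ht.1) ht.2 hγ)

lemma sq_min_rpow_mul_sub_le {a b γ : ℝ} (ha : 0 < a) (hb : 0 < b) (hγ : γ ≠ 0) :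
    (min (a ^ γ) (b ^ γ) * (a - b)) ^ 2 ≤
      (a ^ (γ + 1) + b ^ (γ + 1)) * ((a ^ γ - b ^ γ) * (a - b) / γ) := by
  obtain ⟨t, ht, hmvt⟩ := exists_rpow_sub_rpow_eq ha hb γ
  have hsq : ∀ z : ℝ, 0 < z → z ^ (γ + 1) * z ^ (γ - 1) = (z ^ γ) ^ 2 := fun z hz => by
    rw [← Real.rpow_add hz, ← Real.rpow_mul_natCast hz.le]; congr 1; push_cast; ring
  have hmin : min (a ^ γ) (b ^ γ) ^ 2 ≤
      (a ^ (γ + 1) + b ^ (γ + 1)) * min (a ^ (γ - 1)) (b ^ (γ - 1)) := by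
    have hpow : ∀ c, min (a ^ γ) (b ^ γ) ≤ c → min (a ^ γ) (b ^ γ) ^ 2 ≤ c ^ 2 :=
      fun c hc => pow_le_pow_left₀ (by positivity) hc 2
    rcases min_choice (a ^ (γ - 1)) (b ^ (γ - 1)) with h | h
    · rw [h, add_mul, hsq a ha]
      exact le_add_of_le_of_nonneg (hpow _ (min_le_left _ _)) (by positivity)
    · rw [h, add_mul, hsq b hb]
      exact le_add_of_nonneg_of_le (by positivity) (hpow _ (min_le_right _ _))
  calc (min (a ^ γ) (b ^ γ) * (a - b)) ^ 2
      ≤ (a ^ (γ + 1) + b ^ (γ + 1)) * min (a ^ (γ - 1)) (b ^ (γ - 1)) * (a - b) ^ 2 := by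
        rw [mul_pow]; gcongr
    _ ≤ (a ^ (γ + 1) + b ^ (γ + 1)) * t ^ (γ - 1) * (a - b) ^ 2 := by
        gcongr; exact min_rpow_le_rpow ha hb ht _
    _ = _ := by rw [hmvt]; field_simp

lemma min_rpow_mul_abs_sub_le {a b : ℝ} (ha : 0 < a) (hb : 0 < b) (γ : ℝ) :
    min (a ^ γ) (b ^ γ) * |a - b| ≤ a ^ (γ + 1) + b ^ (γ + 1) := by
  wlog hab : b ≤ a generalizing a b
  · rw [min_comm, abs_sub_comm, add_comm]; exact this hb ha (le_of_not_ge hab)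
  calc min (a ^ γ) (b ^ γ) * |a - b| ≤ a ^ γ * a := by
        rw [abs_of_nonneg (sub_nonneg.2 hab)]
        gcongr
        · exact min_le_left _ _
        · linarith
    _ = a ^ (γ + 1) := (Real.rpow_add_one ha.ne' γ).symm
    _ ≤ _ := le_add_of_nonneg_right (by positivity)

lemma abs_rpow_sub_rpow_le {a b s : ℝ} (ha : 0 ≤ a) (hb : 0 ≤ b) (hs : 1 ≤ s) :
    |a ^ s - b ^ s| ≤ s * ((a ^ (s - 1) + b ^ (s - 1)) * |a - b|) := by
  wlog hab : b ≤ a generalizing a b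
  · rw [abs_sub_comm, abs_sub_comm a b, add_comm (a ^ (s - 1))]
    exact this hb ha (le_of_not_ge hab)
  have hs' : 0 ≤ s - 1 := sub_nonneg.2 hs
  have hderiv : ∀ t ∈ Set.Icc b a,
      HasDerivWithinAt (· ^ s) (s * t ^ (s - 1)) (Set.Icc b a) t :=
    fun t _ => (Real.hasDerivAt_rpow_const (.inr hs)).hasDerivWithinAt
  have hbound : ∀ t ∈ Set.Icc b a, ‖s * t ^ (s - 1)‖ ≤ s * (a ^ (s - 1) + b ^ (s - 1)) :=
    fun t ht => by
      have ht0 : 0 ≤ t := hb.trans ht.1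
      rw [Real.norm_of_nonneg (by positivity)]
      gcongr
      exact (Real.rpow_le_rpow ht0 ht.2 hs').trans (le_add_of_nonneg_right (by positivity))
  rw [← mul_assoc]
  exact (convex_Icc b a).norm_image_sub_le_of_norm_hasDerivWithin_le hderiv hbound
    (Set.left_mem_Icc.2 hab) (Set.right_mem_Icc.2 hab)

/-! ### Pointwise Caccioppoli inequalities -/

lemma half_sq_mul_le_of_sq_le {x y c D E k : ℝ} (hD : 0 ≤ D) (hE : 0 ≤ E)
    (hsq : c ^ 2 ≤ k ^ 2 * E * D) (habs : |c| ≤ |k| * E) :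
    x ^ 2 * D / 2 ≤ x ^ 2 * D + (x ^ 2 - y ^ 2) * c + (2 * k ^ 2 + |k|) * ((x - y) ^ 2 * E) := by
  have hcross : -(x ^ 2 * D / 2 + 2 * k ^ 2 * ((x - y) ^ 2 * E)) ≤ 2 * x * (x - y) * c := by
    refine (abs_le_of_sq_le_sq' ?_ (by positivity)).1
    calc (2 * x * (x - y) * c) ^ 2 = 4 * x ^ 2 * (x - y) ^ 2 * c ^ 2 := by ring
      _ ≤ 4 * x ^ 2 * (x - y) ^ 2 * (k ^ 2 * E * D) := by gcongr
      _ ≤ (x ^ 2 * D / 2 + 2 * k ^ 2 * ((x - y) ^ 2 * E)) ^ 2 := by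
        linarith [sq_nonneg (x ^ 2 * D / 2 - 2 * k ^ 2 * ((x - y) ^ 2 * E))]
  have hlast : (x - y) ^ 2 * c ≤ (x - y) ^ 2 * (|k| * E) := by
    gcongr
    exact (le_abs_self c).trans habs
  linarith

lemma half_sq_mul_increment_le {a b γ : ℝ} (ha : 0 < a) (hb : 0 < b) (hγ : γ ≠ 0)
    (hab : b ^ γ ≤ a ^ γ) (η ζ : ℝ) :
    η ^ 2 * ((a ^ γ - b ^ γ) * (a - b) / γ) / 2 ≤
      (η ^ 2 * a ^ γ - ζ ^ 2 * b ^ γ) * (a - b) / γ +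
        (2 * γ⁻¹ ^ 2 + |γ⁻¹|) * ((η - ζ) ^ 2 * (a ^ (γ + 1) + b ^ (γ + 1))) := by
  have hsq := sq_min_rpow_mul_sub_le ha hb hγ
  have habs := min_rpow_mul_abs_sub_le ha hb γ
  rw [min_eq_right hab] at hsq habs
  have hE : 0 < a ^ (γ + 1) + b ^ (γ + 1) := by positivity
  have hD : 0 ≤ (a ^ γ - b ^ γ) * (a - b) / γ :=
    nonneg_of_mul_nonneg_right ((sq_nonneg _).trans hsq) hE
  refine (half_sq_mul_le_of_sq_le (x := η) (y := ζ) (c := γ⁻¹ * (b ^ γ * (a - b))) (k := γ⁻¹)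
    hD hE.le ?_ ?_).trans_eq (by ring)
  · rw [mul_pow, mul_assoc]; gcongr
  · rw [abs_mul, abs_mul (b ^ γ), abs_of_pos (Real.rpow_pos_of_pos hb γ)]; gcongr

lemma sq_mul_rpow_sub_mul_rpow_le {a b α : ℝ} (ha : 0 < a) (hb : 0 < b) (hα : 2 * α - 1 ≠ 0)
    (η ζ : ℝ) :
    (η * a ^ α - ζ * b ^ α) ^ 2 ≤
      4 * α ^ 2 * ((η ^ 2 * a ^ (2 * α - 1) - ζ ^ 2 * b ^ (2 * α - 1)) * (a - b) / (2 * α - 1)) +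
        (4 * α ^ 2 * (2 * (2 * α - 1)⁻¹ ^ 2 + |(2 * α - 1)⁻¹|) + 2) *
          ((η - ζ) ^ 2 * (a ^ (2 * α) + b ^ (2 * α))) := by
  wlog hab : b ^ (2 * α - 1) ≤ a ^ (2 * α - 1) generalizing a b η ζ
  · convert this hb ha ζ η (le_of_not_ge hab) using 1 <;> ring
  have htest := half_sq_mul_increment_le ha hb hα hab η ζ
  rw [sub_add_cancel] at htest
  have hsplit : (η * a ^ α - ζ * b ^ α) ^ 2 ≤
      2 * (η ^ 2 * (a ^ α - b ^ α) ^ 2) + 2 * ((η - ζ) ^ 2 * (a ^ (2 * α) + b ^ (2 * α))) := by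
    have hpow : b ^ (2 * α) = (b ^ α) ^ 2 := by
      rw [mul_comm, ← Real.rpow_mul_natCast hb.le]; norm_cast
    have hrest : 0 ≤ (η - ζ) ^ 2 * a ^ (2 * α) := by positivity
    rw [hpow]
    nlinarith [sq_nonneg (η * (a ^ α - b ^ α) - (η - ζ) * b ^ α)]
  have hincr : η ^ 2 * (a ^ α - b ^ α) ^ 2 ≤
      α ^ 2 * (η ^ 2 * ((a ^ (2 * α - 1) - b ^ (2 * α - 1)) * (a - b) / (2 * α - 1))) := by
    rw [mul_left_comm]; gcongr; exact sq_rpow_sub_rpow_le ha hb hα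
  linarith [mul_le_mul_of_nonneg_left htest (sq_nonneg α)]

lemma min_sq_mul_sq_log_sub_log_le {a b : ℝ} (ha : 0 < a) (hb : 0 < b) (η ζ : ℝ) :
    min (η ^ 2) (ζ ^ 2) * (Real.log a - Real.log b) ^ 2 ≤
      2 * (-((η ^ 2 * a⁻¹ - ζ ^ 2 * b⁻¹) * (a - b))) + 12 * (η - ζ) ^ 2 := by
  wlog hab : b⁻¹ ≤ a⁻¹ generalizing a b η ζ
  · rw [min_comm]
    convert this hb ha ζ η (le_of_not_ge hab) using 1 <;> ring
  have htest := half_sq_mul_increment_le (γ := -1) ha hb (by norm_num)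
    (by simpa only [Real.rpow_neg_one] using hab) η ζ
  norm_num [Real.rpow_neg_one] at htest
  have hlog : min (η ^ 2) (ζ ^ 2) * (Real.log a - Real.log b) ^ 2 ≤
      η ^ 2 * ((b⁻¹ - a⁻¹) * (a - b)) := by
    gcongr
    · exact min_le_left _ _
    · exact sq_log_sub_log_le ha hb
  linarith

/-! ### Isoperimetry and functional inequalities -/

open Classical in
/-- The `ℓ¹` norm of the gradient of `f` over the edges of `G` inside `W`, each edge counted
twice. -/
def variation {V : Type*} (G : SimpleGraph V) (W : Finset V) (f : V → ℝ) : ℝ :=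
  ∑ x ∈ W, ∑ y ∈ W, G.adjMatrix ℝ x y * |f x - f y|

section Variation

variable {V : Type*}

lemma adjMatrix_nonneg (G : SimpleGraph V) [DecidableRel G.Adj] (x y : V) :
    0 ≤ G.adjMatrix ℝ x y := by
  rw [SimpleGraph.adjMatrix_apply]; split_ifs <;> norm_num

-- Remove from `f` its smallest value `f z` on `S`; no cancellation occurs in any increment.
lemma exists_eq_mul_indicator_add {S : Finset V} (hS : S.Nonempty) {f : V → ℝ}
    (hf : ∀ x, 0 ≤ f x) (hfS : ∀ x ∉ S, f x = 0) :
    ∃ z ∈ S, ∃ g : V → ℝ, (∀ x, 0 ≤ g x) ∧ g z = 0 ∧ (∀ x ∉ S, g x = 0) ∧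
      (∀ x, f x = f z * (S : Set V).indicator 1 x + g x) ∧
      ∀ x y, |f x - f y| =
        f z * |(S : Set V).indicator (1 : V → ℝ) x - (S : Set V).indicator 1 y| + |g x - g y| := by
  obtain ⟨z, hz, hmin⟩ := S.exists_min_image f hS
  have hin : ∀ x ∈ S, (S : Set V).indicator (1 : V → ℝ) x = 1 := fun x hx =>
    Set.indicator_of_mem (mem_coe.2 hx) _
  have hout : ∀ x ∉ S, (S : Set V).indicator (1 : V → ℝ) x = 0 := fun x hx =>
    Set.indicator_of_notMem (mt mem_coe.1 hx) _
  refine ⟨z, hz, fun x => f x - f z * (S : Set V).indicator 1 x, fun x => ?_, ?_, fun x hx => ?_,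
    fun x => by ring, fun x y => ?_⟩
  · by_cases hx : x ∈ S
    · simpa only [hin x hx, mul_one, sub_nonneg] using hmin x hx
    · simp only [hout x hx, hfS x hx, mul_zero, sub_zero, le_refl]
  · simp only [hin z hz, mul_one, sub_self]
  · simp only [hout x hx, hfS x hx, mul_zero, sub_zero]
  · by_cases hx : x ∈ S <;> by_cases hy : y ∈ S
    · simp [hin x hx, hin y hy]
    · have hle := hmin x hx
      simp [hin x hx, hout y hy, hfS y hy, abs_of_nonneg (hf x), abs_of_nonneg (sub_nonneg.2 hle)]
    · have hle := hmin y hy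
      rw [abs_sub_comm (f x), abs_sub_comm (Set.indicator _ _ _), abs_sub_comm (f x - _)]
      simp [hout x hx, hin y hy, hfS x hx, abs_of_nonneg (hf y), abs_of_nonneg (sub_nonneg.2 hle)]
    · simp [hout x hx, hout y hy, hfS x hx, hfS y hy]

-- By induction on the support `S`, `f` is a positive combination of indicators of subsets of `S`
-- along which the variation is additive.
lemma le_variation_of_indicator_le (G : SimpleGraph V) (W : Finset V) {Φ : (V → ℝ) → ℝ}
    (hadd : ∀ f g : V → ℝ, (∀ x, 0 ≤ f x) → (∀ x, 0 ≤ g x) → Φ (f + g) ≤ Φ f + Φ g)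
    (hsmul : ∀ (c : ℝ) (f : V → ℝ), 0 ≤ c → (∀ x, 0 ≤ f x) → Φ (c • f) = c * Φ f)
    {S : Finset V}
    (hind : ∀ A ⊆ S, A.Nonempty →
      Φ ((A : Set V).indicator 1) ≤ variation G W ((A : Set V).indicator 1))
    {f : V → ℝ} (hf : ∀ x, 0 ≤ f x) (hfS : ∀ x ∉ S, f x = 0) :
    Φ f ≤ variation G W f := by
  classical
  induction S using Finset.strongInduction generalizing f with
  | H S ih =>
    rcases S.eq_empty_or_nonempty with rfl | hS
    · obtain rfl : f = 0 := funext fun x => hfS x (notMem_empty x)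
      have hzero := hsmul 0 0 le_rfl hf
      rw [zero_smul, zero_mul] at hzero
      simp [hzero, variation]
    obtain ⟨z, hz, g, hg, hgz, hgS, hfg, hincr⟩ := exists_eq_mul_indicator_add hS hf hfS
    have hΦg : Φ g ≤ variation G W g :=
      ih (S.erase z) (erase_ssubset hz) (fun A hA => hind A (hA.trans (erase_subset _ _))) hg
        fun x hx => by
          by_cases hxz : x = z
          · rw [hxz, hgz]
          · exact hgS x fun hxS => hx (mem_erase.2 ⟨hxz, hxS⟩)
    have hone : ∀ x, 0 ≤ (S : Set V).indicator (1 : V → ℝ) x :=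
      Set.indicator_nonneg fun _ _ => zero_le_one
    calc Φ f = Φ (f z • (S : Set V).indicator 1 + g) := congrArg Φ (funext hfg)
      _ ≤ Φ (f z • (S : Set V).indicator 1) + Φ g :=
        hadd _ _ (fun x => mul_nonneg (hf z) (hone x)) hg
      _ ≤ f z * variation G W ((S : Set V).indicator 1) + variation G W g := by
        rw [hsmul _ _ (hf z) hone]
        gcongr
        · exact hf z
        · exact hind S subset_rfl hS
      _ = variation G W f := by
        simp only [variation, mul_sum, ← sum_add_distrib, hincr]
        exact sum_congr rfl fun x _ => sum_congr rfl fun y _ => by ring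

lemma card_le_variation_indicator (G : SimpleGraph V) {D A W : Finset V} (hDA : D ⊆ A)
    (hAW : A ⊆ W) (hD : ∀ x ∈ D, ∃ y ∈ W, y ∉ A ∧ G.Adj x y) :
    (#D : ℝ) ≤ variation G W ((A : Set V).indicator 1) := by
  classical
  have hterm : ∀ x y, 0 ≤ G.adjMatrix ℝ x y *
      |(A : Set V).indicator (1 : V → ℝ) x - (A : Set V).indicator 1 y| :=
    fun x y => mul_nonneg (adjMatrix_nonneg G x y) (abs_nonneg _)
  have hone : ∀ x ∈ D, 1 ≤ ∑ y ∈ W, G.adjMatrix ℝ x y *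
      |(A : Set V).indicator (1 : V → ℝ) x - (A : Set V).indicator 1 y| := fun x hx => by
    obtain ⟨y, hyW, hyA, hxy⟩ := hD x hx
    refine le_trans ?_ (single_le_sum (fun _ _ => hterm x _) hyW)
    simp [hxy, hDA hx, hyA]
  calc (#D : ℝ) = #D • (1 : ℝ) := by simp
    _ ≤ _ := card_nsmul_le_sum D _ 1 hone
    _ ≤ _ := sum_le_sum_of_subset_of_nonneg (hDA.trans hAW)
        fun _ _ _ => sum_nonneg fun _ _ => hterm _ _
    _ = variation G W ((A : Set V).indicator 1) := by unfold variation; congr!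

end Variation

lemma exists_median {ι : Type*} {B : Finset ι} (hB : B.Nonempty) (v : ι → ℝ) :
    ∃ a, 2 * #{x ∈ B | a < v x} ≤ #B ∧ 2 * #{x ∈ B | v x < a} ≤ #B := by
  obtain ⟨top, htop, hmax⟩ := B.exists_max_image v hB
  have hne : ({x ∈ B | 2 * #{y ∈ B | v x < v y} ≤ #B} : Finset ι).Nonempty :=
    ⟨top, mem_filter.2 ⟨htop, by simp [filter_false_of_mem fun y hy => (hmax y hy).not_gt]⟩⟩
  obtain ⟨z, hz, hmin⟩ := exists_min_image _ v hne
  refine ⟨v z, (mem_filter.1 hz).2, ?_⟩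
  rcases ({x ∈ B | v x < v z} : Finset ι).eq_empty_or_nonempty with hempty | hne
  · simp [hempty]
  obtain ⟨w, hw, hmaxw⟩ := exists_max_image _ v hne
  obtain ⟨hwB, hwz⟩ := mem_filter.1 hw
  have hmany : #B < 2 * #{y ∈ B | v w < v y} := not_le.1 fun h =>
    (hmin w (mem_filter.2 ⟨hwB, h⟩)).not_gt hwz
  have hdisj : Disjoint ({x ∈ B | v x < v z} : Finset ι) {y ∈ B | v w < v y} :=
    disjoint_filter.2 fun x hx hxz hwx => (hmaxw x (mem_filter.2 ⟨hx, hxz⟩)).not_gt hwx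
  have hcard : #{x ∈ B | v x < v z} + #{y ∈ B | v w < v y} ≤ #B := by
    classical
    rw [← card_union_of_disjoint hdisj]
    exact card_le_card (union_subset (filter_subset _ _) (filter_subset _ _))
  omega

lemma abs_posPart_sub_add_abs_negPart_sub (a b : ℝ) :
    |a⁺ - b⁺| + |a⁻ - b⁻| = |a - b| := by
  rcases le_total 0 a with ha | ha <;> rcases le_total 0 b with hb | hb <;>
    simp only [posPart_of_nonneg, posPart_of_nonpos, negPart_of_nonneg, negPart_of_nonpos, ha, hb]
  · simp
  · rw [abs_of_nonneg, abs_of_nonpos, abs_of_nonneg] <;> linarith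
  · rw [abs_of_nonpos, abs_of_nonneg, abs_of_nonpos] <;> linarith
  · rw [sub_zero, abs_zero, zero_add, neg_sub_neg, abs_sub_comm]

/-- A locally finite connected graph together with its neighbourhoods and its balls for the graph
distance, presented as finite sets. -/
structure MetricGraph (V : Type*) where
  G : SimpleGraph V
  nbr : V → Finset V
  mem_nbr : ∀ x y, y ∈ nbr x ↔ G.Adj x y
  connected : G.Connected
  ball : V → ℝ → Finset V
  mem_ball : ∀ (x : V) (r : ℝ) (y : V), y ∈ ball x r ↔ (G.dist x y : ℝ) ≤ r

/-- The constant of the isoperimetric inequality for all finite sets, and of the `L¹` Sobolev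
inequality, of a graph with volume regularity constant `C` and relative isoperimetric constant
`c`. -/
def sobolevConst (d : ℕ) (C c : ℝ) : ℝ := C ^ 2 * (3 * C) ^ (1 / (d : ℝ)) / c

/-- The constant of the `L¹` Poincaré inequality on balls of a graph with volume regularity
constant `C` and relative isoperimetric constant `c`. -/
def poincareConst (C c : ℝ) : ℝ := (1 + C) / c + 1

namespace MetricGraph

variable {V : Type*} (X : MetricGraph V)

/-- Volume regularity of order `d`: balls of radius `r ≥ 1` have about `r ^ d` points. -/
def VolumeRegular (d : ℕ) (C : ℝ) : Prop :=
  ∀ (x : V) (r : ℝ), 1 ≤ r → C⁻¹ * r ^ d ≤ (#(X.ball x r) : ℝ) ∧ (#(X.ball x r) : ℝ) ≤ C * r ^ d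

/-- The relative isoperimetric inequality in balls, for subsets of less than half the volume. -/
def RelIsoperimetric (c : ℝ) : Prop :=
  ∀ (x : V) (r : ℝ) (A : Finset V), 1 ≤ r → A.Nonempty → A ⊆ X.ball x r →
    (#A : ℝ) < (#(X.ball x r) : ℝ) / 2 → c / r ≤ (#(relBdry X.G (X.ball x r) A) : ℝ) / (#A : ℝ)

variable {X} {d : ℕ} {C c : ℝ}

lemma mem_ball_comm {x y : V} {r : ℝ} : y ∈ X.ball x r ↔ x ∈ X.ball y r := by
  rw [X.mem_ball, X.mem_ball, SimpleGraph.dist_comm]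

lemma mem_ball_self (x : V) {r : ℝ} (hr : 0 ≤ r) : x ∈ X.ball x r := by
  rw [X.mem_ball, SimpleGraph.dist_self]
  exact_mod_cast hr

lemma ball_subset_ball (x : V) {r s : ℝ} (hrs : r ≤ s) : X.ball x r ⊆ X.ball x s := by
  intro y hy
  rw [X.mem_ball] at hy ⊢
  exact hy.trans hrs

lemma dist_le_dist_add_one (x : V) {y z : V} (hyz : X.G.Adj y z) :
    (X.G.dist x z : ℝ) ≤ X.G.dist x y + 1 := by
  have htri := X.connected.dist_triangle (u := x) (v := y) (w := z)
  rw [SimpleGraph.dist_eq_one_iff_adj.2 hyz] at htri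
  exact_mod_cast htri

lemma abs_dist_sub_dist_le_one (x : V) {y z : V} (hyz : X.G.Adj y z) :
    |(X.G.dist x y : ℝ) - X.G.dist x z| ≤ 1 :=
  abs_sub_le_iff.2 ⟨sub_le_iff_le_add'.2 (dist_le_dist_add_one x hyz.symm),
    sub_le_iff_le_add'.2 (dist_le_dist_add_one x hyz)⟩

lemma mem_ball_add_one {x y z : V} {r : ℝ} (hy : y ∈ X.ball x r) (hyz : X.G.Adj y z) :
    z ∈ X.ball x (r + 1) := by
  rw [X.mem_ball] at hy ⊢
  linarith [dist_le_dist_add_one x hyz]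

lemma exists_adj_dist_add_one_eq {x y : V} (hyx : y ≠ x) :
    ∃ z, X.G.Adj y z ∧ X.G.dist x z + 1 = X.G.dist x y := by
  obtain ⟨w, hw⟩ := X.connected.exists_walk_length_eq_dist y x
  cases w with
  | nil => exact absurd rfl hyx
  | @cons _ z _ hyz w =>
    refine ⟨z, hyz, ?_⟩
    have hlen : X.G.dist z x ≤ w.length := SimpleGraph.dist_le w
    have hstep : X.G.dist x y ≤ X.G.dist x z + 1 := by
      exact_mod_cast dist_le_dist_add_one x hyz.symm
    rw [SimpleGraph.Walk.length_cons, SimpleGraph.dist_comm] at hw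
    rw [SimpleGraph.dist_comm] at hlen
    omega

lemma nbr_subset_ball (x : V) : X.nbr x ⊆ X.ball x 1 := fun y hy => by
  rw [X.mem_ball, SimpleGraph.dist_eq_one_iff_adj.2 ((X.mem_nbr x y).1 hy), Nat.cast_one]

lemma VolumeRegular.one_le (hvol : X.VolumeRegular d C) : 1 ≤ C := by
  obtain ⟨x⟩ := X.connected.nonempty
  have hcard : (1 : ℝ) ≤ #(X.ball x 1) := by
    exact_mod_cast card_pos.2 ⟨x, mem_ball_self x zero_le_one⟩
  simpa only [one_pow, mul_one] using hcard.trans (hvol x 1 le_rfl).2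

lemma VolumeRegular.pos (hvol : X.VolumeRegular d C) : 0 < C := one_pos.trans_le hvol.one_le

open Classical in
lemma sum_card_inter_ball {A Y : Finset V} {r : ℝ} (hY : ∀ z ∈ A, X.ball z r ⊆ Y) :
    ∑ x ∈ Y, #(A ∩ X.ball x r) = ∑ z ∈ A, #(X.ball z r) := by
  convert sum_card_bipartiteAbove_eq_sum_card_bipartiteBelow
    (s := Y) (t := A) (fun x z => z ∈ X.ball x r) using 2 with x _ z hz
  · rw [bipartiteAbove, filter_mem_eq_inter]
  · congr 1
    ext x
    rw [bipartiteBelow, mem_filter, mem_ball_comm]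
    exact ⟨fun hx => ⟨hY z hz (mem_ball_comm.1 hx), hx⟩, And.right⟩

open Classical in
lemma RelIsoperimetric.mul_card_inter_ball_le (hiso : X.RelIsoperimetric c) {A : Finset V} {x : V}
    {r : ℝ} (hr : 1 ≤ r) (hA : 2 * (#A : ℝ) < #(X.ball x r)) :
    c / r * #(A ∩ X.ball x r) ≤ #(intBdry X.G A ∩ X.ball x r) := by
  rcases (A ∩ X.ball x r).eq_empty_or_nonempty with hempty | hne
  · simp [hempty]
  have hinter : (#(A ∩ X.ball x r) : ℝ) ≤ #A := by exact_mod_cast card_le_card inter_subset_left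
  have hbdry := hiso x r _ hr hne inter_subset_right (by linarith)
  rw [le_div_iff₀ (by exact_mod_cast card_pos.2 hne)] at hbdry
  refine hbdry.trans (Nat.cast_le.2 (card_le_card fun z hz => ?_))
  simp only [relBdry, intBdry, mem_filter, mem_inter] at hz ⊢
  obtain ⟨⟨hzA, hzB⟩, y, hyB, hyA, hzy⟩ := hz
  exact ⟨⟨hzA, y, fun hy => hyA ⟨hy, hyB⟩, hzy⟩, hzB⟩

-- Average the relative inequality over all balls of radius `r` that meet `A`.
lemma card_le_mul_card_intBdry (hvol : X.VolumeRegular d C) (hiso : X.RelIsoperimetric c)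
    (hc : 0 < c) {A : Finset V} {r : ℝ} (hr : 1 ≤ r) (hA : 2 * (#A : ℝ) < C⁻¹ * r ^ d) :
    (#A : ℝ) ≤ C ^ 2 * r / c * #(intBdry X.G A) := by
  classical
  have hC := hvol.pos
  have hsub : intBdry X.G A ⊆ A := filter_subset _ _
  have hY : ∀ z ∈ A, X.ball z r ⊆ A.biUnion fun z => X.ball z r := fun z hz =>
    subset_biUnion_of_mem (fun z => X.ball z r) hz
  have hsum : c / r * ∑ z ∈ A, (#(X.ball z r) : ℝ) ≤ ∑ z ∈ intBdry X.G A, (#(X.ball z r) : ℝ) := by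
    rw [← Nat.cast_sum, ← Nat.cast_sum, ← sum_card_inter_ball hY,
      ← sum_card_inter_ball fun z hz => hY z (hsub hz), Nat.cast_sum, Nat.cast_sum, mul_sum]
    exact sum_le_sum fun x _ => hiso.mul_card_inter_ball_le hr (hA.trans_le (hvol x r hr).1)
  have hlower : (#A : ℝ) * (C⁻¹ * r ^ d) ≤ ∑ z ∈ A, (#(X.ball z r) : ℝ) := by
    rw [← nsmul_eq_mul]
    exact card_nsmul_le_sum _ _ _ fun z _ => (hvol z r hr).1
  have hupper : ∑ z ∈ intBdry X.G A, (#(X.ball z r) : ℝ) ≤ #(intBdry X.G A) * (C * r ^ d) := by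
    rw [← nsmul_eq_mul]
    exact sum_le_card_nsmul _ _ _ fun z _ => (hvol z r hr).2
  have hmain : c / r * (#A * (C⁻¹ * r ^ d)) ≤ #(intBdry X.G A) * (C * r ^ d) := by
    refine le_trans ?_ (hsum.trans hupper)
    gcongr
  have : 0 < r := one_pos.trans_le hr
  calc (#A : ℝ) = C * r / (c * r ^ d) * (c / r * (#A * (C⁻¹ * r ^ d))) := by field_simp
    _ ≤ C * r / (c * r ^ d) * (#(intBdry X.G A) * (C * r ^ d)) := by gcongr
    _ = C ^ 2 * r / c * #(intBdry X.G A) := by field_simp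

lemma card_rpow_le_mul_card_intBdry (hvol : X.VolumeRegular d C) (hiso : X.RelIsoperimetric c)
    (hc : 0 < c) (hd : d ≠ 0) {A : Finset V} (hA : A.Nonempty) :
    (#A : ℝ) ^ (1 - 1 / (d : ℝ)) ≤ sobolevConst d C c * #(intBdry X.G A) := by
  have hC1 := hvol.one_le
  have hC := hvol.pos
  have hcard : (1 : ℝ) ≤ #A := by exact_mod_cast card_pos.2 hA
  set r : ℝ := (3 * C * #A) ^ (1 / (d : ℝ)) with hr
  have hr1 : 1 ≤ r := Real.one_le_rpow (by nlinarith) (by positivity)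
  have hrd : r ^ d = 3 * C * #A := by
    rw [hr, one_div, Real.rpow_inv_natCast_pow (by positivity) hd]
  have hsmall : 2 * (#A : ℝ) < C⁻¹ * r ^ d := by
    rw [hrd, mul_assoc, mul_left_comm, inv_mul_cancel_left₀ hC.ne']
    linarith
  rw [Real.rpow_sub (by positivity), Real.rpow_one, div_le_iff₀ (by positivity)]
  calc (#A : ℝ) ≤ C ^ 2 * r / c * #(intBdry X.G A) :=
        card_le_mul_card_intBdry hvol hiso hc hr1 hsmall
    _ = _ := by rw [hr, Real.mul_rpow (by positivity) (by positivity), sobolevConst]; ring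

lemma sum_rpow_le_mul_variation (hvol : X.VolumeRegular d C) (hiso : X.RelIsoperimetric c)
    (hc : 0 < c) (hd : 2 ≤ d) (x₀ : V) (n : ℝ) {f : V → ℝ} (hf : ∀ x, 0 ≤ f x)
    (hf0 : ∀ x ∉ X.ball x₀ (n - 1), f x = 0) :
    (∑ x ∈ X.ball x₀ n, f x ^ ((d : ℝ) / (d - 1))) ^ (1 - 1 / (d : ℝ)) ≤
      sobolevConst d C c * variation X.G (X.ball x₀ n) f := by
  classical
  have hC := hvol.pos
  have hd1 : (1 : ℝ) < d := by exact_mod_cast hd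
  set B := X.ball x₀ n
  set t : ℝ := d / (d - 1)
  have ht : 1 ≤ t := (one_le_div (by linarith)).2 (by linarith)
  have hS : 0 < sobolevConst d C c := by unfold sobolevConst; positivity
  have hsub : X.ball x₀ (n - 1) ⊆ B := ball_subset_ball x₀ (by linarith)
  rw [show 1 - 1 / (d : ℝ) = 1 / t by rw [one_div_div, sub_div, div_self (by positivity)],
    ← inv_mul_le_iff₀ hS]
  refine le_variation_of_indicator_le X.G B (S := X.ball x₀ (n - 1))
    (Φ := fun f => (sobolevConst d C c)⁻¹ * (∑ x ∈ B, f x ^ t) ^ (1 / t))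
    (fun f g hf hg => ?_) (fun a f ha hf => ?_) (fun A hA hAne => ?_) hf hf0
  · rw [← mul_add]
    gcongr
    exact Real.Lp_add_le_of_nonneg B ht (fun x _ => hf x) fun x _ => hg x
  · simp only [Pi.smul_apply, smul_eq_mul, Real.mul_rpow ha (hf _), ← mul_sum]
    rw [Real.mul_rpow (by positivity) (sum_nonneg fun x _ => Real.rpow_nonneg (hf x) t),
      ← Real.rpow_mul ha, mul_one_div_cancel (by positivity), Real.rpow_one, mul_left_comm]
  · have hone : ∀ x, (A : Set V).indicator (1 : V → ℝ) x ^ t = (A : Set V).indicator 1 x :=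
      fun x => by
        by_cases hx : x ∈ A <;> simp [hx, Real.zero_rpow (one_pos.trans_le ht).ne']
    simp only [hone]
    rw [sum_indicator_subset _ (hA.trans hsub), inv_mul_le_iff₀ hS, one_div_div]
    simp only [Pi.one_apply, sum_const, nsmul_eq_mul, mul_one]
    rw [sub_div, div_self (by positivity)]
    refine (card_rpow_le_mul_card_intBdry hvol hiso hc (by positivity) hAne).trans ?_
    gcongr
    refine card_le_variation_indicator X.G (filter_subset _ _) (hA.trans hsub) fun x hx => ?_
    obtain ⟨hxA, y, hyA, hxy⟩ := mem_filter.1 hx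
    exact ⟨y, by simpa only [sub_add_cancel] using mem_ball_add_one (hA hxA) hxy, hyA, hxy⟩

lemma relBdry_nonempty {x₀ : V} {r : ℝ} {A : Finset V} (hne : A.Nonempty)
    (hA : A ⊂ X.ball x₀ r) : (relBdry X.G (X.ball x₀ r) A).Nonempty := by
  classical
  by_contra hempty
  have hclosed : ∀ x ∈ A, ∀ y ∈ X.ball x₀ r, X.G.Adj x y → y ∈ A := fun x hx y hy hxy => by
    by_contra hyA
    exact hempty ⟨x, mem_filter.2 ⟨hx, y, hy, hyA, hxy⟩⟩
  have hradial : ∀ k : ℕ, ∀ y ∈ X.ball x₀ r, X.G.dist x₀ y = k → (y ∈ A ↔ x₀ ∈ A) := by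
    intro k
    induction k with
    | zero => intro y _ hy; rw [X.connected.dist_eq_zero_iff.1 hy]
    | succ k ih =>
      intro y hyB hy
      obtain ⟨z, hyz, hz⟩ := exists_adj_dist_add_one_eq (X := X) (x := x₀) (y := y)
        (by rintro rfl; simp at hy)
      have hzB : z ∈ X.ball x₀ r := by
        rw [X.mem_ball] at hyB ⊢
        exact le_trans (by exact_mod_cast (by omega)) hyB
      rw [← ih z hzB (by omega)]
      exact ⟨fun h => hclosed y h z hzB hyz, fun h => hclosed z h y hyB hyz.symm⟩
  obtain ⟨a, ha⟩ := hne
  have hx₀ : x₀ ∈ A := (hradial _ a (hA.1 ha) rfl).1 ha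
  exact hA.2 fun y hy => (hradial _ y hy rfl).2 hx₀

open Classical in
lemma relBdry_erase_subset (B A : Finset V) (z : V) :
    relBdry X.G B (A.erase z) ⊆ relBdry X.G B A ∪ X.nbr z := by
  intro x hx
  obtain ⟨hxA, y, hyB, hyA, hxy⟩ := mem_filter.1 hx
  rw [mem_union, X.mem_nbr]
  by_cases hyz : y = z
  · exact .inr (hyz ▸ hxy.symm)
  · exact .inl (mem_filter.2
      ⟨mem_of_mem_erase hxA, y, hyB, fun hy => hyA (mem_erase.2 ⟨hyz, hy⟩), hxy⟩)

lemma VolumeRegular.card_nbr_le (hvol : X.VolumeRegular d C) (x : V) : (#(X.nbr x) : ℝ) ≤ C := by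
  have hball := (hvol x 1 le_rfl).2
  rw [one_pow, mul_one] at hball
  exact (Nat.cast_le.2 (card_le_card (nbr_subset_ball x))).trans hball

-- Sets of exactly half the volume are not covered by the hypothesis; remove one boundary point.
lemma card_le_mul_card_relBdry (hvol : X.VolumeRegular d C) (hiso : X.RelIsoperimetric c)
    (hc : 0 < c) {x₀ : V} {r : ℝ} (hr : 1 ≤ r) {A : Finset V} (hne : A.Nonempty)
    (hA : A ⊆ X.ball x₀ r) (hhalf : 2 * #A ≤ #(X.ball x₀ r)) :
    (#A : ℝ) ≤ poincareConst C c * r * #(relBdry X.G (X.ball x₀ r) A) := by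
  classical
  have hC := hvol.pos
  have hr0 : 0 < r := one_pos.trans_le hr
  have hpos : 0 < #A := card_pos.2 hne
  obtain ⟨z, hz⟩ := relBdry_nonempty hne (hA.ssubset_of_ne fun h => by rw [h] at hpos hhalf; omega)
  set D := relBdry X.G (X.ball x₀ r) A
  have hD : (1 : ℝ) ≤ #D := by exact_mod_cast card_pos.2 ⟨z, hz⟩
  have herase : (#(A.erase z) : ℝ) + 1 = #A := by
    exact_mod_cast card_erase_add_one (mem_filter.1 hz).1
  have hhalf' : 2 * (#A : ℝ) ≤ #(X.ball x₀ r) := by exact_mod_cast hhalf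
  have hbdry : (#(relBdry X.G (X.ball x₀ r) (A.erase z)) : ℝ) ≤ (1 + C) * #D := by
    have hcard : (#(relBdry X.G (X.ball x₀ r) (A.erase z)) : ℝ) ≤ #D + #(X.nbr z) := by
      exact_mod_cast (card_le_card (relBdry_erase_subset _ _ z)).trans (card_union_le _ _)
    nlinarith [hvol.card_nbr_le z]
  have hmain : (#(A.erase z) : ℝ) ≤ (1 + C) / c * r * #D := by
    rcases (A.erase z).eq_empty_or_nonempty with hempty | hne'
    · rw [hempty, card_empty, Nat.cast_zero]; positivity
    have hle := hiso x₀ r _ hr hne' ((erase_subset _ _).trans hA) (by linarith)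
    rw [le_div_iff₀ (by exact_mod_cast card_pos.2 hne')] at hle
    calc (#(A.erase z) : ℝ) = r / c * (c / r * #(A.erase z)) := by field_simp
      _ ≤ r / c * ((1 + C) * #D) :=
        mul_le_mul_of_nonneg_left (hle.trans hbdry) (by positivity)
      _ = (1 + C) / c * r * #D := by ring
  calc (#A : ℝ) = #(A.erase z) + 1 * 1 := by rw [mul_one, herase]
    _ ≤ (1 + C) / c * r * #D + r * #D := by gcongr
    _ = poincareConst C c * r * #D := by rw [poincareConst]; ring

lemma sum_le_mul_variation (hvol : X.VolumeRegular d C) (hiso : X.RelIsoperimetric c)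
    (hc : 0 < c) (x₀ : V) {r : ℝ} (hr : 1 ≤ r) {f : V → ℝ} (hf : ∀ x, 0 ≤ f x)
    (hhalf : 2 * #{x ∈ X.ball x₀ r | f x ≠ 0} ≤ #(X.ball x₀ r)) :
    ∑ x ∈ X.ball x₀ r, f x ≤ poincareConst C c * r * variation X.G (X.ball x₀ r) f := by
  classical
  have hC := hvol.pos
  set B := X.ball x₀ r
  have hK : 0 < poincareConst C c * r := by unfold poincareConst; positivity
  rw [← inv_mul_le_iff₀ hK]
  have hfB : ∀ x ∈ B, (B : Set V).indicator f x = f x := fun x hx =>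
    Set.indicator_of_mem (mem_coe.2 hx) f
  have hmain : (poincareConst C c * r)⁻¹ * ∑ x ∈ B, (B : Set V).indicator f x ≤
      variation X.G B ((B : Set V).indicator f) := by
    refine le_variation_of_indicator_le X.G B (S := {x ∈ B | f x ≠ 0})
      (Φ := fun g => (poincareConst C c * r)⁻¹ * ∑ x ∈ B, g x)
      (fun g h _ _ => by simp only [Pi.add_apply, sum_add_distrib, mul_add, le_refl])
      (fun a g _ _ => by simp only [Pi.smul_apply, smul_eq_mul, ← mul_sum, mul_left_comm])
      (fun A hA hne => ?_) (Set.indicator_nonneg fun x _ => hf x) (fun x hx => ?_)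
    · have hAB : A ⊆ B := hA.trans (filter_subset _ _)
      rw [sum_indicator_subset _ hAB, inv_mul_le_iff₀ hK]
      simp only [Pi.one_apply, sum_const, nsmul_eq_mul, mul_one]
      refine (card_le_mul_card_relBdry hvol hiso hc hr hne hAB ?_).trans ?_
      · exact (Nat.mul_le_mul_left 2 (card_le_card hA)).trans hhalf
      · gcongr
        exact card_le_variation_indicator X.G (filter_subset _ _) hAB
          fun x hx => (mem_filter.1 hx).2
    · by_contra hne
      have hxB : x ∈ B := mem_coe.1 (Set.mem_of_indicator_ne_zero hne)
      exact hx (mem_filter.2 ⟨hxB, hfB x hxB ▸ hne⟩)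
  rw [sum_congr rfl hfB] at hmain
  refine hmain.trans_eq (sum_congr rfl fun x hx => sum_congr rfl fun y hy => ?_)
  rw [hfB x hx, hfB y hy]

lemma exists_sum_abs_sub_le_mul_variation (hvol : X.VolumeRegular d C)
    (hiso : X.RelIsoperimetric c) (hc : 0 < c) (x₀ : V) {r : ℝ} (hr : 1 ≤ r) (v : V → ℝ) :
    ∃ a, ∑ x ∈ X.ball x₀ r, |v x - a| ≤
      poincareConst C c * r * variation X.G (X.ball x₀ r) v := by
  obtain ⟨a, habove, hbelow⟩ := exists_median ⟨x₀, mem_ball_self x₀ (zero_le_one.trans hr)⟩ v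
  have hpos := sum_le_mul_variation hvol hiso hc x₀ hr (f := fun x => (v x - a)⁺)
    (fun x => posPart_nonneg _) (by simpa [posPart_eq_zero] using habove)
  have hneg := sum_le_mul_variation hvol hiso hc x₀ hr (f := fun x => (v x - a)⁻)
    (fun x => negPart_nonneg _) (by simpa [negPart_eq_zero] using hbelow)
  refine ⟨a, ?_⟩
  calc ∑ x ∈ X.ball x₀ r, |v x - a|
      = ∑ x ∈ X.ball x₀ r, (v x - a)⁺ + ∑ x ∈ X.ball x₀ r, (v x - a)⁻ := by
        simp only [← sum_add_distrib, posPart_add_negPart]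
    _ ≤ _ := add_le_add hpos hneg
    _ = poincareConst C c * r * variation X.G (X.ball x₀ r) v := by
        simp only [← mul_add, variation, ← sum_add_distrib, abs_posPart_sub_add_abs_negPart_sub,
          sub_sub_sub_cancel_right]

end MetricGraph

lemma sum_le_sum_of_eq_zero_of_notMem {ι : Type*} {s t : Finset ι} {f : ι → ℝ}
    (hf : ∀ i, 0 ≤ f i) (hft : ∀ i ∉ t, f i = 0) : ∑ i ∈ s, f i ≤ ∑ i ∈ t, f i := by
  classical
  rw [← sum_filter_ne_zero]
  exact sum_le_sum_of_subset_of_nonneg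
    (fun i hi => not_imp_comm.1 (hft i) (mem_filter.1 hi).2) fun i _ _ => hf i

/-- A metric graph with positive weights on its edges, extended by `0` to all pairs of vertices. -/
structure WeightedGraph (V : Type*) extends MetricGraph V where
  ω : V → V → ℝ
  symm : ∀ x y, ω x y = ω y x
  pos : ∀ x y, G.Adj x y → 0 < ω x y
  zero : ∀ x y, ¬G.Adj x y → ω x y = 0

namespace WeightedGraph

variable {V : Type*} {X : WeightedGraph V}

lemma weight_nonneg (x y : V) : 0 ≤ X.ω x y := by
  by_cases hxy : X.G.Adj x y
  · exact (X.pos x y hxy).le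
  · exact (X.zero x y hxy).ge

lemma mu_nonneg (x : V) : 0 ≤ mu X.nbr X.ω x := sum_nonneg fun y _ => weight_nonneg x y

lemma nu_nonneg (x : V) : 0 ≤ nu X.nbr X.ω x :=
  sum_nonneg fun y _ => inv_nonneg.2 (weight_nonneg x y)

lemma sum_le_sum_nbr (B : Finset V) {x : V} {g : V → ℝ} (hg : ∀ y, 0 ≤ g y)
    (hg0 : ∀ y, ¬X.G.Adj x y → g y = 0) : ∑ y ∈ B, g y ≤ ∑ y ∈ X.nbr x, g y :=
  sum_le_sum_of_eq_zero_of_notMem hg fun y hy => hg0 y fun hxy => hy ((X.mem_nbr x y).2 hxy)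

lemma sum_weight_le_mu (B : Finset V) (x : V) : ∑ y ∈ B, X.ω x y ≤ mu X.nbr X.ω x :=
  sum_le_sum_nbr B (weight_nonneg x) (X.zero x)

lemma sum_inv_weight_le_nu (B : Finset V) (x : V) : ∑ y ∈ B, (X.ω x y)⁻¹ ≤ nu X.nbr X.ω x :=
  sum_le_sum_nbr B (fun y => inv_nonneg.2 (weight_nonneg x y))
    fun y hy => by rw [X.zero x y hy, inv_zero]

lemma dSum_eq_sum (B : Finset V) (f : V → ℝ) :
    dSum X.G X.ω B f = ∑ x ∈ B, ∑ y ∈ B, X.ω x y * (f x - f y) ^ 2 :=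
  sum_congr rfl fun x _ => sum_congr rfl fun y _ => by
    split_ifs with hxy
    · rfl
    · rw [X.zero x y hxy, zero_mul]

lemma dSum_nonneg (B : Finset V) (f : V → ℝ) : 0 ≤ dSum X.G X.ω B f := by
  rw [dSum_eq_sum]
  exact sum_nonneg fun x _ => sum_nonneg fun y _ => mul_nonneg (weight_nonneg x y) (sq_nonneg _)

open Classical in
lemma sq_sum_adjMatrix_mul_le (B : Finset V) (a f : V → ℝ) :
    (∑ x ∈ B, ∑ y ∈ B, X.G.adjMatrix ℝ x y * (a x * |f x - f y|)) ^ 2 ≤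
      (∑ x ∈ B, nu X.nbr X.ω x * a x ^ 2) * dSum X.G X.ω B f := by
  have hcs := sum_sq_le_sum_mul_sum_of_sq_le_mul (B ×ˢ B)
    (r := fun z => X.G.adjMatrix ℝ z.1 z.2 * (a z.1 * |f z.1 - f z.2|))
    (f := fun z => (X.ω z.1 z.2)⁻¹ * a z.1 ^ 2)
    (g := fun z => X.ω z.1 z.2 * (f z.1 - f z.2) ^ 2)
    (fun z _ => mul_nonneg (inv_nonneg.2 (weight_nonneg _ _)) (sq_nonneg _))
    (fun z _ => mul_nonneg (weight_nonneg _ _) (sq_nonneg _)) fun z _ => by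
      by_cases hz : X.G.Adj z.1 z.2
      · have := X.pos _ _ hz
        simp only [SimpleGraph.adjMatrix_apply, hz, if_true, one_mul, mul_pow, sq_abs]
        exact (by field_simp : _ = _).le
      · simp [hz, X.zero _ _ hz]
  simp only [sum_product, ← dSum_eq_sum] at hcs
  refine hcs.trans (mul_le_mul_of_nonneg_right (sum_le_sum fun x _ => ?_) (dSum_nonneg B f))
  rw [← sum_mul]
  exact mul_le_mul_of_nonneg_right (sum_inv_weight_le_nu B x) (sq_nonneg _)

lemma sq_variation_rpow_le (B : Finset V) {f : V → ℝ} (hf : ∀ x, 0 ≤ f x) {s : ℝ} (hs : 1 ≤ s) :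
    variation X.G B (fun x => f x ^ s) ^ 2 ≤
      4 * s ^ 2 * ((∑ x ∈ B, nu X.nbr X.ω x * (f x ^ (s - 1)) ^ 2) * dSum X.G X.ω B f) := by
  classical
  set J := ∑ x ∈ B, ∑ y ∈ B, X.G.adjMatrix ℝ x y * (f x ^ (s - 1) * |f x - f y|) with hJ
  have hsymm : ∑ x ∈ B, ∑ y ∈ B, X.G.adjMatrix ℝ x y * (f y ^ (s - 1) * |f x - f y|) = J := by
    rw [sum_comm, hJ]
    simp only [SimpleGraph.adjMatrix_apply, X.G.adj_comm, abs_sub_comm]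
  have hvar : variation X.G B (fun x => f x ^ s) ≤ 2 * s * J := by
    calc variation X.G B (fun x => f x ^ s)
        ≤ ∑ x ∈ B, ∑ y ∈ B, X.G.adjMatrix ℝ x y *
            (s * ((f x ^ (s - 1) + f y ^ (s - 1)) * |f x - f y|)) := by
          refine sum_le_sum fun x _ => sum_le_sum fun y _ => ?_
          convert mul_le_mul_of_nonneg_left (abs_rpow_sub_rpow_le (hf x) (hf y) hs)
            (adjMatrix_nonneg X.G x y)
      _ = s * J + s * J := by
          nth_rewrite 2 [← hsymm]
          simp only [hJ, mul_sum, ← sum_add_distrib]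
          exact sum_congr rfl fun x _ => sum_congr rfl fun y _ => by ring
      _ = 2 * s * J := by ring
  have hvar0 : 0 ≤ variation X.G B (fun x => f x ^ s) :=
    sum_nonneg fun x _ => sum_nonneg fun y _ => mul_nonneg (by convert adjMatrix_nonneg X.G x y)
      (abs_nonneg _)
  calc variation X.G B (fun x => f x ^ s) ^ 2 ≤ (2 * s * J) ^ 2 := by gcongr
    _ = 4 * s ^ 2 * J ^ 2 := by ring
    _ ≤ _ := by
      gcongr
      exact sq_sum_adjMatrix_mul_le B (fun x => f x ^ (s - 1)) f

lemma sum_nu_mul_sq_rpow_le (B : Finset V) {f : V → ℝ} (hf : ∀ x, 0 ≤ f x) {q q' : ℝ}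
    (hq : q.HolderConjugate q') (s : ℝ) :
    ∑ x ∈ B, nu X.nbr X.ω x * (f x ^ s) ^ 2 ≤
      (∑ x ∈ B, nu X.nbr X.ω x ^ q) ^ (1 / q) * (∑ x ∈ B, f x ^ (2 * s * q')) ^ (1 / q') := by
  refine (Real.inner_le_Lp_mul_Lq_of_nonneg B hq (fun x _ => nu_nonneg x)
    fun x _ => sq_nonneg _).trans_eq ?_
  simp only [← Real.rpow_natCast, ← Real.rpow_mul (hf _)]
  congr! 5
  push_cast
  ring

-- Apply the `L¹` Sobolev inequality to `f ^ (1 + ρ / q')`.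
lemma sum_rpow_rpow_le_mul_dSum {d : ℕ} {C c : ℝ} (hvol : X.VolumeRegular d C)
    (hiso : X.RelIsoperimetric c) (hc : 0 < c) (hd : 2 ≤ d) {q q' ρ : ℝ}
    (hq : q.HolderConjugate q') (hρ : 0 < ρ) (hρq : 1 / ρ = 1 - 2 / (d : ℝ) + 1 / q) (x₀ : V)
    (n : ℝ) {f : V → ℝ} (hf : ∀ x, 0 ≤ f x) (hf0 : ∀ x ∉ X.ball x₀ (n - 1), f x = 0) :
    (∑ x ∈ X.ball x₀ n, f x ^ (2 * ρ)) ^ (1 / ρ) ≤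
      4 * sobolevConst d C c ^ 2 * (1 + ρ / q') ^ 2 *
        (∑ x ∈ X.ball x₀ n, nu X.nbr X.ω x ^ q) ^ (1 / q) * dSum X.G X.ω (X.ball x₀ n) f := by
  have hd1 : (1 : ℝ) < d := by exact_mod_cast hd
  have := hvol.pos
  have hq'0 := hq.symm.pos
  set B := X.ball x₀ n
  set T := ∑ x ∈ B, f x ^ (2 * ρ) with hT
  have hT0 : 0 ≤ T := sum_nonneg fun x _ => Real.rpow_nonneg (hf x) _
  set N := (∑ x ∈ B, nu X.nbr X.ω x ^ q) ^ (1 / q)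
  have hN : 0 ≤ N := Real.rpow_nonneg (sum_nonneg fun x _ => Real.rpow_nonneg (nu_nonneg x) _) _
  have hE := dSum_nonneg (X := X) B f
  rcases hT0.eq_or_lt with hT0' | hTpos
  · rw [← hT0', Real.zero_rpow (by positivity)]; positivity
  have hconj : 1 / q' = 1 - 1 / q := by
    rw [one_div, one_div, ← hq.one_sub_inv]
  have hρq' : 2 - 2 / (d : ℝ) = 1 / ρ + 1 / q' := by rw [hρq, hconj]; ring
  set s := 1 + ρ / q' with hs
  have hs1 : 1 ≤ s := le_add_of_nonneg_right (by positivity)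
  have hsd : s * ((d : ℝ) / (d - 1)) = 2 * ρ := by
    have : (d : ℝ) - 1 ≠ 0 := by linarith
    rw [show s = ρ * (2 - 2 / (d : ℝ)) by rw [hρq', hs]; field_simp]
    field_simp
  have hsq' : 2 * (s - 1) * q' = 2 * ρ := by rw [hs]; field_simp; ring
  have hsob := MetricGraph.sum_rpow_le_mul_variation hvol hiso hc hd x₀ n
    (f := fun x => f x ^ s) (fun x => Real.rpow_nonneg (hf x) s)
    fun x hx => by rw [hf0 x hx, Real.zero_rpow (by linarith)]
  simp only [← Real.rpow_mul (hf _), hsd] at hsob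
  have hholder := sum_nu_mul_sq_rpow_le (X := X) B hf hq (s - 1)
  rw [hsq', ← hT] at hholder
  refine le_of_mul_le_mul_right ?_ (Real.rpow_pos_of_pos hTpos (1 / q'))
  calc T ^ (1 / ρ) * T ^ (1 / q') = (T ^ (1 - 1 / (d : ℝ))) ^ 2 := by
        rw [← Real.rpow_add hTpos, ← hρq', ← Real.rpow_mul_natCast hT0]
        congr 1
        push_cast
        ring
    _ ≤ (sobolevConst d C c * variation X.G B fun x => f x ^ s) ^ 2 := by gcongr
    _ ≤ sobolevConst d C c ^ 2 * (4 * s ^ 2 * (N * T ^ (1 / q') * dSum X.G X.ω B f)) := by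
        rw [mul_pow]
        gcongr
        refine (sq_variation_rpow_le B hf hs1).trans ?_
        gcongr
    _ = _ := by ring

end WeightedGraph

namespace MetricGraph

variable {V : Type*} {X : MetricGraph V}

/-- The radial cutoff function which is `1` up to distance `R₁` from `x₀`, vanishes from distance
`R₂` on, and is linear in the distance in between. -/
def cutoff (X : MetricGraph V) (x₀ : V) (R₁ R₂ : ℝ) (x : V) : ℝ :=
  min 1 (max 0 ((R₂ - X.G.dist x₀ x) / (R₂ - R₁)))

lemma cutoff_nonneg (x₀ : V) (R₁ R₂ : ℝ) (x : V) : 0 ≤ X.cutoff x₀ R₁ R₂ x :=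
  le_min zero_le_one (le_max_left _ _)

lemma cutoff_eq_one {x₀ x : V} {R₁ R₂ : ℝ} (hR : R₁ < R₂) (hx : x ∈ X.ball x₀ R₁) :
    X.cutoff x₀ R₁ R₂ x = 1 := by
  rw [X.mem_ball] at hx
  refine min_eq_left (le_max_of_le_right ?_)
  rw [le_div_iff₀ (sub_pos.2 hR)]
  linarith

lemma cutoff_eq_zero {x₀ x : V} {R₁ R₂ : ℝ} (hR : R₁ < R₂) (hx : x ∉ X.ball x₀ R₂) :
    X.cutoff x₀ R₁ R₂ x = 0 := by
  rw [X.mem_ball, not_le] at hx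
  rw [cutoff, max_eq_left, min_eq_right zero_le_one]
  exact div_nonpos_of_nonpos_of_nonneg (by linarith) (by linarith)

lemma sq_cutoff_sub_le (x₀ : V) {R₁ R₂ : ℝ} (hR : R₁ < R₂) {x y : V} (hxy : X.G.Adj x y) :
    (X.cutoff x₀ R₁ R₂ x - X.cutoff x₀ R₁ R₂ y) ^ 2 ≤ 1 / (R₂ - R₁) ^ 2 := by
  have : 0 < R₂ - R₁ := sub_pos.2 hR
  have hclamp : ∀ s t : ℝ, |min 1 (max 0 s) - min 1 (max 0 t)| ≤ |s - t| := fun s t => by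
    refine (abs_min_sub_min_le_max _ _ _ _).trans (max_le (by simp) ?_)
    exact (abs_max_sub_max_le_max _ _ _ _).trans (max_le (by simp) le_rfl)
  rw [← sq_abs, ← one_div_pow]
  gcongr
  refine (hclamp _ _).trans ?_
  rw [← sub_div, sub_sub_sub_cancel_left, abs_div, abs_of_pos ‹0 < R₂ - R₁›]
  gcongr
  exact abs_dist_sub_dist_le_one x₀ hxy.symm

lemma sq_cutoff_sub_le_indicator (x₀ : V) {R₁ R₂ : ℝ} (hR : R₁ < R₂) {x y : V}
    (hxy : X.G.Adj x y) :
    (X.cutoff x₀ R₁ R₂ x - X.cutoff x₀ R₁ R₂ y) ^ 2 ≤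
      (X.ball x₀ (R₂ + 1) : Set V).indicator (fun _ => 1 / (R₂ - R₁) ^ 2) x := by
  by_cases hx : x ∈ X.ball x₀ (R₂ + 1)
  · rw [Set.indicator_of_mem (mem_coe.2 hx)]
    exact sq_cutoff_sub_le x₀ hR hxy
  · have hy : y ∉ X.ball x₀ R₂ := fun hy => hx (mem_ball_add_one hy hxy.symm)
    have hx' : x ∉ X.ball x₀ R₂ := fun hx' => hx (ball_subset_ball x₀ (by linarith) hx')
    rw [Set.indicator_of_notMem (mt mem_coe.1 hx), cutoff_eq_zero hR hx', cutoff_eq_zero hR hy,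
      sub_self, zero_pow two_ne_zero]

end MetricGraph

section Norms

variable {V : Type*} {B : Finset V} {p : ℝ} {f : V → ℝ}

lemma nrm_nonneg (B : Finset V) (p : ℝ) (f : V → ℝ) : 0 ≤ nrm B p f :=
  Real.rpow_nonneg (mul_nonneg (by positivity)
    (sum_nonneg fun x _ => Real.rpow_nonneg (abs_nonneg _) _)) _

lemma sum_rpow_rpow_eq_card_rpow_mul_nrm (hB : B.Nonempty) (p : ℝ) (hf : ∀ x, 0 ≤ f x) :
    (∑ x ∈ B, f x ^ p) ^ (1 / p) = (#B : ℝ) ^ (1 / p) * nrm B p f := by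
  have hcard : (0 : ℝ) < #B := by exact_mod_cast card_pos.2 hB
  have : 0 ≤ ∑ x ∈ B, f x ^ p := sum_nonneg fun x _ => Real.rpow_nonneg (hf x) _
  simp only [nrm, abs_of_nonneg (hf _)]
  rw [← Real.mul_rpow hcard.le (by positivity), mul_inv_cancel_left₀ hcard.ne']

lemma le_card_rpow_mul_nrm (hp : 0 < p) (hf : ∀ x, 0 ≤ f x) {x : V} (hx : x ∈ B) :
    f x ≤ (#B : ℝ) ^ (1 / p) * nrm B p f := by
  rw [← sum_rpow_rpow_eq_card_rpow_mul_nrm ⟨x, hx⟩ p hf, one_div,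
    Real.le_rpow_inv_iff_of_pos (hf x) (sum_nonneg fun y _ => Real.rpow_nonneg (hf y) p) hp]
  exact single_le_sum (f := fun x => f x ^ p) (fun y _ => Real.rpow_nonneg (hf y) p) hx

lemma sum_le_card_mul_nrm (hB : B.Nonempty) (hp : 1 ≤ p) (hf : ∀ x, 0 ≤ f x) :
    ∑ x ∈ B, f x ≤ #B * nrm B p f := by
  have hcard : (0 : ℝ) < #B := by exact_mod_cast card_pos.2 hB
  have hmean := Real.arith_mean_le_rpow_mean B (fun _ => (#B : ℝ)⁻¹) f
    (fun _ _ => by positivity) (by simp [hcard.ne']) (fun x _ => hf x) hp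
  rw [← inv_mul_le_iff₀ hcard]
  simpa only [nrm, mul_sum, abs_of_nonneg (hf _)] using hmean

end Norms

namespace WeightedGraph

variable {V : Type*} {X : WeightedGraph V}

lemma sum_weight_mul_sub_eq_zero {u : V → ℝ} {x : V} (hu : lap X.nbr X.ω u x = 0) :
    ∑ y ∈ X.nbr x, X.ω x y * (u y - u x) = 0 := by
  rcases mul_eq_zero.1 hu with hmu | hsum
  · have hzero := (sum_eq_zero_iff_of_nonneg fun y _ => weight_nonneg x y).1 (inv_eq_zero.1 hmu)
    exact sum_eq_zero fun y hy => by rw [hzero y hy, zero_mul]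
  · exact hsum

lemma sum_test_eq_zero {x₀ : V} {n : ℝ} {u φ : V → ℝ}
    (hu : ∀ x ∈ X.ball x₀ n, lap X.nbr X.ω u x = 0) (hφ : ∀ x ∉ X.ball x₀ (n - 1), φ x = 0) :
    ∑ x ∈ X.ball x₀ n, ∑ y ∈ X.ball x₀ n, X.ω x y * ((φ x - φ y) * (u x - u y)) = 0 := by
  have hrow : ∀ x ∈ X.ball x₀ n, ∑ y ∈ X.ball x₀ n, X.ω x y * (φ x * (u x - u y)) = 0 := by
    intro x hx
    by_cases hx' : x ∈ X.ball x₀ (n - 1)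
    · have hsub : X.nbr x ⊆ X.ball x₀ n := fun y hy => by
        simpa only [sub_add_cancel] using
          MetricGraph.mem_ball_add_one hx' ((X.mem_nbr x y).1 hy)
      rw [← sum_subset hsub fun y _ hy => by rw [X.zero x y (mt (X.mem_nbr x y).2 hy), zero_mul]]
      calc ∑ y ∈ X.nbr x, X.ω x y * (φ x * (u x - u y))
          = -(φ x) * ∑ y ∈ X.nbr x, X.ω x y * (u y - u x) := by
            rw [mul_sum]
            exact sum_congr rfl fun y _ => by ring
        _ = 0 := by rw [sum_weight_mul_sub_eq_zero (hu x hx), mul_zero]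
    · simp [hφ x hx']
  calc _ = ∑ x ∈ X.ball x₀ n, ∑ y ∈ X.ball x₀ n, X.ω x y * (φ x * (u x - u y)) +
        ∑ x ∈ X.ball x₀ n, ∑ y ∈ X.ball x₀ n, X.ω y x * (φ y * (u y - u x)) := by
        simp only [← sum_add_distrib]
        refine sum_congr rfl fun x _ => sum_congr rfl fun y _ => ?_
        rw [X.symm y x]
        ring
    _ = 0 := by
        rw [sum_comm (f := fun x y => X.ω y x * (φ y * (u y - u x))), sum_eq_zero hrow, add_zero]

lemma sum_sq_cutoff_sub_mul_le (x₀ : V) {R₁ R₂ : ℝ} (hR : R₁ < R₂) (B : Finset V) {w : V → ℝ}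
    (hw : ∀ x, 0 ≤ w x) :
    ∑ x ∈ B, ∑ y ∈ B, X.ω x y * ((X.cutoff x₀ R₁ R₂ x - X.cutoff x₀ R₁ R₂ y) ^ 2 * w x) ≤
      1 / (R₂ - R₁) ^ 2 * ∑ x ∈ X.ball x₀ (R₂ + 1), mu X.nbr X.ω x * w x := by
  set g := (X.ball x₀ (R₂ + 1) : Set V).indicator fun _ => 1 / (R₂ - R₁) ^ 2
  have hg : ∀ x, 0 ≤ g x := Set.indicator_nonneg fun x _ => by positivity
  have hrow : ∀ x, ∑ y ∈ B, X.ω x y *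
      ((X.cutoff x₀ R₁ R₂ x - X.cutoff x₀ R₁ R₂ y) ^ 2 * w x) ≤ g x * (mu X.nbr X.ω x * w x) := by
    intro x
    calc _ ≤ ∑ y ∈ B, X.ω x y * (g x * w x) := sum_le_sum fun y _ => by
          by_cases hxy : X.G.Adj x y
          · exact mul_le_mul_of_nonneg_left (mul_le_mul_of_nonneg_right
              (MetricGraph.sq_cutoff_sub_le_indicator x₀ hR hxy) (hw x)) (weight_nonneg x y)
          · simp [X.zero x y hxy]
      _ = (∑ y ∈ B, X.ω x y) * (g x * w x) := by rw [sum_mul]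
      _ ≤ mu X.nbr X.ω x * (g x * w x) :=
          mul_le_mul_of_nonneg_right (sum_weight_le_mu B x) (mul_nonneg (hg x) (hw x))
      _ = g x * (mu X.nbr X.ω x * w x) := by ring
  calc _ ≤ ∑ x ∈ B, g x * (mu X.nbr X.ω x * w x) := sum_le_sum fun x _ => hrow x
    _ ≤ ∑ x ∈ X.ball x₀ (R₂ + 1), g x * (mu X.nbr X.ω x * w x) :=
        sum_le_sum_of_eq_zero_of_notMem
          (fun x => mul_nonneg (hg x) (mul_nonneg (mu_nonneg x) (hw x)))
          fun x hx => by
            rw [show g x = 0 from Set.indicator_of_notMem (mt mem_coe.1 hx) _, zero_mul]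
    _ = _ := by
        rw [mul_sum]
        exact sum_congr rfl fun x hx => by
          rw [show g x = _ from Set.indicator_of_mem (mem_coe.2 hx) _]

-- Summing the pointwise bound, the term `a * …` disappears because `u` is harmonic.
lemma sum_weight_mul_le_of_le_test_add {x₀ : V} {n R₁ R₂ : ℝ} (hR : R₁ < R₂) {u φ w : V → ℝ}
    {F : V → V → ℝ} {a K : ℝ} (hK : 0 ≤ K) (hw : ∀ x, 0 ≤ w x)
    (hu : ∀ x ∈ X.ball x₀ n, lap X.nbr X.ω u x = 0) (hφ : ∀ x ∉ X.ball x₀ (n - 1), φ x = 0)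
    (hF : ∀ x y, F x y ≤ a * ((φ x - φ y) * (u x - u y)) +
      K * ((X.cutoff x₀ R₁ R₂ x - X.cutoff x₀ R₁ R₂ y) ^ 2 * (w x + w y))) :
    ∑ x ∈ X.ball x₀ n, ∑ y ∈ X.ball x₀ n, X.ω x y * F x y ≤
      2 * K / (R₂ - R₁) ^ 2 * ∑ x ∈ X.ball x₀ (R₂ + 1), mu X.nbr X.ω x * w x := by
  set B := X.ball x₀ n
  set η := X.cutoff x₀ R₁ R₂
  have hsymm : ∑ x ∈ B, ∑ y ∈ B, X.ω x y * ((η x - η y) ^ 2 * w y) =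
      ∑ x ∈ B, ∑ y ∈ B, X.ω x y * ((η x - η y) ^ 2 * w x) := by
    rw [sum_comm]
    exact sum_congr rfl fun x _ => sum_congr rfl fun y _ => by rw [X.symm]; ring
  calc ∑ x ∈ B, ∑ y ∈ B, X.ω x y * F x y
      ≤ ∑ x ∈ B, ∑ y ∈ B, X.ω x y * (a * ((φ x - φ y) * (u x - u y)) +
          K * ((η x - η y) ^ 2 * (w x + w y))) :=
        sum_le_sum fun x _ => sum_le_sum fun y _ =>
          mul_le_mul_of_nonneg_left (hF x y) (weight_nonneg x y)
    _ = a * ∑ x ∈ B, ∑ y ∈ B, X.ω x y * ((φ x - φ y) * (u x - u y)) +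
          (K * ∑ x ∈ B, ∑ y ∈ B, X.ω x y * ((η x - η y) ^ 2 * w x) +
            K * ∑ x ∈ B, ∑ y ∈ B, X.ω x y * ((η x - η y) ^ 2 * w y)) := by
        simp only [mul_sum, ← sum_add_distrib]
        exact sum_congr rfl fun x _ => sum_congr rfl fun y _ => by ring
    _ = 2 * K * ∑ x ∈ B, ∑ y ∈ B, X.ω x y * ((η x - η y) ^ 2 * w x) := by
        rw [sum_test_eq_zero hu hφ, hsymm]
        ring
    _ ≤ 2 * K * (1 / (R₂ - R₁) ^ 2 * ∑ x ∈ X.ball x₀ (R₂ + 1), mu X.nbr X.ω x * w x) := by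
        gcongr
        exact sum_sq_cutoff_sub_mul_le x₀ hR B hw
    _ = _ := by ring

/-- The positive functions that are harmonic for the weights on the finite set `B`. -/
structure PosHarmonicOn (X : WeightedGraph V) (B : Finset V) (u : V → ℝ) : Prop where
  pos : ∀ x, 0 < u x
  harmonic : ∀ x ∈ B, lap X.nbr X.ω u x = 0

lemma caccioppoli_const_le {α m : ℝ} (hm : 0 < m) (hm1 : m ≤ 1) (hαm : m ≤ |2 * α - 1|) :
    4 * α ^ 2 * (2 * (2 * α - 1)⁻¹ ^ 2 + |(2 * α - 1)⁻¹|) + 2 ≤ 14 * (1 + α ^ 2) / m ^ 2 := by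
  have hinv : |(2 * α - 1)⁻¹| ≤ m⁻¹ := by rw [abs_inv]; gcongr
  have hm1' : 1 ≤ m⁻¹ := (one_le_inv₀ hm).2 hm1
  rw [← sq_abs (2 * α - 1)⁻¹]
  calc 4 * α ^ 2 * (2 * |(2 * α - 1)⁻¹| ^ 2 + |(2 * α - 1)⁻¹|) + 2
      ≤ 4 * α ^ 2 * (2 * m⁻¹ ^ 2 + m⁻¹ ^ 2) + 2 * m⁻¹ ^ 2 := by
        gcongr
        · exact hinv.trans (le_self_pow₀ hm1' two_ne_zero)
        · nlinarith
    _ ≤ 14 * (1 + α ^ 2) * m⁻¹ ^ 2 := by nlinarith [sq_nonneg m⁻¹, sq_nonneg (α * m⁻¹)]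
    _ = 14 * (1 + α ^ 2) / m ^ 2 := by rw [inv_pow, div_eq_mul_inv]

lemma PosHarmonicOn.dSum_cutoff_mul_rpow_le {x₀ : V} {n R₁ R₂ : ℝ} {u : V → ℝ}
    (hu : X.PosHarmonicOn (X.ball x₀ n) u) (hR : R₁ < R₂) (hRn : R₂ ≤ n - 1) {α m : ℝ}
    (hm : 0 < m) (hm1 : m ≤ 1) (hαm : m ≤ |2 * α - 1|) :
    dSum X.G X.ω (X.ball x₀ n) (fun x => X.cutoff x₀ R₁ R₂ x * u x ^ α) ≤
      28 * (1 + α ^ 2) / m ^ 2 / (R₂ - R₁) ^ 2 *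
        ∑ x ∈ X.ball x₀ (R₂ + 1), mu X.nbr X.ω x * u x ^ (2 * α) := by
  have hα : 2 * α - 1 ≠ 0 := abs_pos.1 (hm.trans_le hαm)
  rw [dSum_eq_sum, show 28 * (1 + α ^ 2) / m ^ 2 = 2 * (14 * (1 + α ^ 2) / m ^ 2) by ring]
  refine sum_weight_mul_le_of_le_test_add hR (by positivity)
    (φ := fun x => X.cutoff x₀ R₁ R₂ x ^ 2 * u x ^ (2 * α - 1)) (a := 4 * α ^ 2 / (2 * α - 1))
    (fun x => (Real.rpow_pos_of_pos (hu.pos x) _).le) hu.harmonic (fun x hx => ?_) fun x y => ?_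
  · rw [MetricGraph.cutoff_eq_zero hR fun hx' => hx (MetricGraph.ball_subset_ball x₀ hRn hx'),
      zero_pow two_ne_zero, zero_mul]
  · have hx := Real.rpow_pos_of_pos (hu.pos x) (2 * α)
    have hy := Real.rpow_pos_of_pos (hu.pos y) (2 * α)
    calc _ ≤ _ := sq_mul_rpow_sub_mul_rpow_le (hu.pos x) (hu.pos y) hα _ _
      _ ≤ _ := add_le_add (by ring_nf; rfl)
        (mul_le_mul_of_nonneg_right (caccioppoli_const_le hm hm1 hαm) (by positivity))

lemma PosHarmonicOn.dSum_log_le {x₀ : V} {n : ℝ} {u : V → ℝ}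
    (hu : X.PosHarmonicOn (X.ball x₀ n) u) (hn : 8 ≤ n) :
    dSum X.G X.ω (X.ball x₀ (3 / 4 * n)) (fun x => Real.log (u x)) ≤
      768 / n ^ 2 * ∑ x ∈ X.ball x₀ n, mu X.nbr X.ω x := by
  have hR : 3 / 4 * n < n - 1 := by linarith
  have hDB : X.ball x₀ (3 / 4 * n) ⊆ X.ball x₀ n :=
    MetricGraph.ball_subset_ball x₀ (by linarith)
  set η := X.cutoff x₀ (3 / 4 * n) (n - 1) with hη
  have hterm : ∀ x y, 0 ≤ X.ω x y * (min (η x ^ 2) (η y ^ 2) *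
      (Real.log (u x) - Real.log (u y)) ^ 2) :=
    fun x y => mul_nonneg (weight_nonneg x y) (by positivity)
  have hcut : dSum X.G X.ω (X.ball x₀ (3 / 4 * n)) (fun x => Real.log (u x)) ≤
      ∑ x ∈ X.ball x₀ n, ∑ y ∈ X.ball x₀ n, X.ω x y *
        (min (η x ^ 2) (η y ^ 2) * (Real.log (u x) - Real.log (u y)) ^ 2) := by
    rw [dSum_eq_sum]
    refine (sum_le_sum fun x hx => (sum_le_sum fun y hy => ?_).trans
      (sum_le_sum_of_subset_of_nonneg hDB fun y _ _ => hterm x y)).trans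
      (sum_le_sum_of_subset_of_nonneg hDB fun x _ _ => sum_nonneg fun y _ => hterm x y)
    rw [hη, MetricGraph.cutoff_eq_one hR hx, MetricGraph.cutoff_eq_one hR hy, min_self, one_pow,
      one_mul]
  have htest := sum_weight_mul_le_of_le_test_add (X := X) (x₀ := x₀) (n := n) hR
    (φ := fun x => η x ^ 2 * (u x)⁻¹) (w := fun _ => 1) (a := -2) (K := 6) (by norm_num)
    (fun _ => zero_le_one) hu.harmonic
    (fun x hx => by rw [hη, MetricGraph.cutoff_eq_zero hR hx, zero_pow two_ne_zero, zero_mul])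
    fun x y => by
      refine (min_sq_mul_sq_log_sub_log_le (hu.pos x) (hu.pos y) (η x) (η y)).trans_eq ?_
      ring
  simp only [mul_one, sub_add_cancel] at htest
  have hgap : 2 * 6 / (n - 1 - 3 / 4 * n) ^ 2 ≤ 768 / n ^ 2 := by
    rw [div_le_div_iff₀ (by nlinarith) (by positivity)]
    nlinarith
  exact hcut.trans (htest.trans
    (mul_le_mul_of_nonneg_right hgap (sum_nonneg fun x _ => mu_nonneg x)))

/-- The ellipticity contrast `max 1 (‖μ‖_p ‖ν‖_q)` of the weights on a ball. -/
def contrast (X : WeightedGraph V) (p q : ℝ) (x₀ : V) (n : ℝ) : ℝ :=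
  max 1 (nrm (X.ball x₀ n) p (mu X.nbr X.ω) * nrm (X.ball x₀ n) q (nu X.nbr X.ω))

lemma one_le_contrast (p q : ℝ) (x₀ : V) (n : ℝ) : 1 ≤ X.contrast p q x₀ n := le_max_left _ _

lemma nrm_mul_nrm_le_contrast (p q : ℝ) (x₀ : V) (n : ℝ) :
    nrm (X.ball x₀ n) p (mu X.nbr X.ω) * nrm (X.ball x₀ n) q (nu X.nbr X.ω) ≤
      X.contrast p q x₀ n :=
  le_max_right _ _

lemma PosHarmonicOn.variation_log_le {p q : ℝ} (hp : 1 ≤ p) (hq : 1 ≤ q) {x₀ : V} {n : ℝ}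
    {u : V → ℝ} (hu : X.PosHarmonicOn (X.ball x₀ n) u) (hn : 8 ≤ n) :
    variation X.G (X.ball x₀ (3 / 4 * n)) (fun x => Real.log (u x)) ≤
      28 / n * #(X.ball x₀ n) * X.contrast p q x₀ n := by
  have hne : (X.ball x₀ n).Nonempty := ⟨x₀, MetricGraph.mem_ball_self x₀ (by linarith)⟩
  have hM1 := X.one_le_contrast p q x₀ n
  have hM := X.nrm_mul_nrm_le_contrast p q x₀ n
  have hmu := sum_le_card_mul_nrm hne hp (mu_nonneg (X := X))
  have hnu := sum_le_card_mul_nrm hne hq (nu_nonneg (X := X))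
  set M := X.contrast p q x₀ n
  set Nμ := nrm (X.ball x₀ n) p (mu X.nbr X.ω)
  set Nν := nrm (X.ball x₀ n) q (nu X.nbr X.ω)
  set D := X.ball x₀ (3 / 4 * n)
  have hNμ : 0 ≤ Nμ := nrm_nonneg _ _ _
  have hNν : 0 ≤ Nν := nrm_nonneg _ _ _
  have hnuD : ∑ x ∈ D, nu X.nbr X.ω x ≤ #(X.ball x₀ n) * Nν :=
    (sum_le_sum_of_subset_of_nonneg (MetricGraph.ball_subset_ball x₀ (by linarith))
      fun x _ _ => nu_nonneg x).trans hnu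
  have hcs := sq_sum_adjMatrix_mul_le (X := X) D (fun _ => 1) fun x => Real.log (u x)
  simp only [one_mul, one_pow, mul_one] at hcs
  refine le_of_sq_le_sq (hcs.trans ?_) (by positivity)
  calc (∑ x ∈ D, nu X.nbr X.ω x) * dSum X.G X.ω D (fun x => Real.log (u x))
      ≤ #(X.ball x₀ n) * Nν * (768 / n ^ 2 * (#(X.ball x₀ n) * Nμ)) :=
        mul_le_mul hnuD ((hu.dSum_log_le hn).trans (by gcongr)) (dSum_nonneg _ _)
          ((sum_nonneg fun x _ => nu_nonneg x).trans hnuD)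
    _ = 768 / n ^ 2 * #(X.ball x₀ n) ^ 2 * (Nμ * Nν) := by ring
    _ ≤ 784 / n ^ 2 * #(X.ball x₀ n) ^ 2 * (M * M) := by
        gcongr ?_ / n ^ 2 * #(X.ball x₀ n) ^ 2 * ?_
        · norm_num
        · exact hM.trans (le_mul_of_one_le_left (by positivity) hM1)
    _ = (28 / n * #(X.ball x₀ n) * M) ^ 2 := by ring

lemma PosHarmonicOn.exists_sum_abs_log_sub_le {d : ℕ} {C c : ℝ} (hvol : X.VolumeRegular d C)
    (hiso : X.RelIsoperimetric c) (hc : 0 < c) {p q : ℝ} (hp : 1 ≤ p) (hq : 1 ≤ q) {x₀ : V}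
    {n : ℝ} {u : V → ℝ} (hu : X.PosHarmonicOn (X.ball x₀ n) u) (hn : 8 ≤ n) :
    ∃ a, ∑ x ∈ X.ball x₀ (3 / 4 * n), |Real.log (u x) - a| ≤
      #(X.ball x₀ n) * (21 * poincareConst C c * X.contrast p q x₀ n) := by
  obtain ⟨a, ha⟩ := MetricGraph.exists_sum_abs_sub_le_mul_variation hvol hiso hc x₀
    (r := 3 / 4 * n) (by linarith) fun x => Real.log (u x)
  have := hvol.pos
  have hP : 0 ≤ poincareConst C c := by unfold poincareConst; positivity
  refine ⟨a, ha.trans ?_⟩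
  calc poincareConst C c * (3 / 4 * n) *
        variation X.G (X.ball x₀ (3 / 4 * n)) (fun x => Real.log (u x))
      ≤ poincareConst C c * (3 / 4 * n) * (28 / n * #(X.ball x₀ n) * X.contrast p q x₀ n) := by
        gcongr
        exact hu.variation_log_le hp hq hn
    _ = _ := by field_simp; ring

end WeightedGraph

section Holder

variable {V : Type*} {A B : Finset V} {f g : V → ℝ}

lemma sum_mul_le_card_rpow_mul_nrm_mul {p p' : ℝ} (hp : p.HolderConjugate p') (hAB : A ⊆ B)
    (hB : B.Nonempty) (hf : ∀ x, 0 ≤ f x) (hg : ∀ x, 0 ≤ g x) :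
    ∑ x ∈ A, f x * g x ≤
      (#B : ℝ) ^ (1 / p) * nrm B p f * (∑ x ∈ A, g x ^ p') ^ (1 / p') := by
  have := hp.pos
  have hg' : 0 ≤ ∑ x ∈ A, g x ^ p' := sum_nonneg fun x _ => Real.rpow_nonneg (hg x) _
  rw [← sum_rpow_rpow_eq_card_rpow_mul_nrm hB p hf]
  refine (Real.inner_le_Lp_mul_Lq_of_nonneg A hp (fun x _ => hf x) fun x _ => hg x).trans ?_
  gcongr
  · exact sum_nonneg fun x _ => Real.rpow_nonneg (hf x) _
  · exact fun x _ _ => Real.rpow_nonneg (hf x) _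

lemma sum_rpow_le_rpow_sum {χ : ℝ} (hχ : 1 ≤ χ) (A : Finset V) (hf : ∀ x, 0 ≤ f x) :
    ∑ x ∈ A, f x ^ χ ≤ (∑ x ∈ A, f x) ^ χ := by
  classical
  induction A using Finset.induction_on with
  | empty => simp [Real.zero_rpow (one_pos.trans_le hχ).ne']
  | insert a A ha ih =>
    rw [sum_insert ha, sum_insert ha]
    exact (add_le_add_right ih _).trans
      (Real.add_rpow_le_rpow_add (hf a) (sum_nonneg fun x _ => hf x) hχ)

lemma le_rpow_mul_rpow_div {a b F ρ p' : ℝ} (ha : 0 ≤ a) (hb : 0 ≤ b) (hF : 0 ≤ F) (hρ : 0 < ρ)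
    (h : a ^ (1 / ρ) ≤ F * b ^ (1 / p')) : a ≤ F ^ ρ * b ^ (ρ / p') := by
  calc a = (a ^ (1 / ρ)) ^ ρ := by rw [← Real.rpow_mul ha, one_div_mul_cancel hρ.ne', Real.rpow_one]
    _ ≤ (F * b ^ (1 / p')) ^ ρ := by gcongr
    _ = F ^ ρ * b ^ (ρ / p') := by
        rw [Real.mul_rpow hF (by positivity), ← Real.rpow_mul hb, one_div_mul_eq_div]

end Holder

lemma MetricGraph.sum_rpow_le_sum_cutoff_mul_rpow {V : Type*} {X : MetricGraph V} {B : Finset V}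
    {x₀ : V} {R₁ R₂ : ℝ} (hR : R₁ < R₂) (hB : X.ball x₀ R₁ ⊆ B) {u : V → ℝ} (hu : ∀ x, 0 < u x)
    (α ρ : ℝ) :
    ∑ x ∈ X.ball x₀ R₁, u x ^ (2 * α * ρ) ≤
      ∑ x ∈ B, (X.cutoff x₀ R₁ R₂ x * u x ^ α) ^ (2 * ρ) := by
  calc ∑ x ∈ X.ball x₀ R₁, u x ^ (2 * α * ρ)
      = ∑ x ∈ X.ball x₀ R₁, (X.cutoff x₀ R₁ R₂ x * u x ^ α) ^ (2 * ρ) := by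
        refine sum_congr rfl fun x hx => ?_
        rw [cutoff_eq_one hR hx, one_mul, ← Real.rpow_mul (hu x).le]
        congr 1
        ring
    _ ≤ _ := sum_le_sum_of_subset_of_nonneg hB fun x _ _ =>
        Real.rpow_nonneg (mul_nonneg (cutoff_nonneg _ _ _ x) (Real.rpow_nonneg (hu x).le _)) _

lemma MetricGraph.VolumeRegular.card_rpow_le {V : Type*} {X : MetricGraph V} {d : ℕ} {C : ℝ}
    (hvol : X.VolumeRegular d C) (hd : 0 < d) (x₀ : V) {n : ℝ} (hn : 1 ≤ n) :
    (#(X.ball x₀ n) : ℝ) ^ (2 / (d : ℝ)) ≤ C ^ (2 / (d : ℝ)) * n ^ 2 := by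
  calc (#(X.ball x₀ n) : ℝ) ^ (2 / (d : ℝ)) ≤ (C * n ^ d) ^ (2 / (d : ℝ)) :=
        Real.rpow_le_rpow (by positivity) (hvol x₀ n hn).2 (by positivity)
    _ = _ := by
        rw [Real.mul_rpow hvol.pos.le (by positivity), ← Real.rpow_natCast n d,
          ← Real.rpow_mul (by linarith), ← Real.rpow_natCast n 2]
        congr 2
        push_cast
        field_simp

/-- The constant in the gain of integrability for the power `α` of a positive harmonic function,
where `m` bounds `|2 * α - 1|` from below and `q'` is conjugate to `q`. -/
def gainConst (d : ℕ) (C c q' ρ m : ℝ) : ℝ :=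
  1 + 4 * sobolevConst d C c ^ 2 * (1 + ρ / q') ^ 2 * (112 / m ^ 2) * C ^ (2 / (d : ℝ)) + C * 2 ^ d

lemma one_le_gainConst {d : ℕ} {C c q' ρ m : ℝ} (hC : 0 ≤ C) : 1 ≤ gainConst d C c q' ρ m := by
  rw [gainConst, add_assoc]
  exact le_add_of_nonneg_right (by positivity)

namespace WeightedGraph

variable {V : Type*} {X : WeightedGraph V} {d : ℕ} {C c p p' q q' ρ m : ℝ} {x₀ : V} {n : ℝ}
  {u : V → ℝ} {α : ℝ}

lemma PosHarmonicOn.rpow_sum_rpow_le (hvol : X.VolumeRegular d C) (hiso : X.RelIsoperimetric c)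
    (hc : 0 < c) (hd : 2 ≤ d) (hp : p.HolderConjugate p') (hq : q.HolderConjugate q') (hρ : 0 < ρ)
    (hρq : 1 / ρ = 1 - 2 / (d : ℝ) + 1 / q) (hu : X.PosHarmonicOn (X.ball x₀ n) u) (hn : 1 ≤ n)
    {R₁ R₂ : ℝ} (hR : R₁ < R₂) (hRn : R₂ ≤ n - 1) (hm : 0 < m) (hm1 : m ≤ 1)
    (hαm : m ≤ |2 * α - 1|) :
    (∑ x ∈ X.ball x₀ R₁, u x ^ (2 * α * ρ)) ^ (1 / ρ) ≤
      4 * sobolevConst d C c ^ 2 * (1 + ρ / q') ^ 2 * (28 * (1 + α ^ 2) / m ^ 2 / (R₂ - R₁) ^ 2) *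
        (#(X.ball x₀ n) : ℝ) ^ (1 / p + 1 / q) * X.contrast p q x₀ n *
        (∑ x ∈ X.ball x₀ (R₂ + 1), u x ^ (2 * α * p')) ^ (1 / p') := by
  have hne : (X.ball x₀ n).Nonempty := ⟨x₀, MetricGraph.mem_ball_self x₀ (by linarith)⟩
  have hcard : (0 : ℝ) < #(X.ball x₀ n) := by exact_mod_cast card_pos.2 hne
  have hM := X.nrm_mul_nrm_le_contrast p q x₀ n
  have hpow : ∀ x (s : ℝ), 0 ≤ u x ^ s := fun x s => Real.rpow_nonneg (hu.pos x).le s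
  have hlow := MetricGraph.sum_rpow_le_sum_cutoff_mul_rpow (X := X.toMetricGraph) hR
    (MetricGraph.ball_subset_ball x₀ (by linarith : R₁ ≤ n)) hu.pos α ρ
  have hsob := sum_rpow_rpow_le_mul_dSum hvol hiso hc hd hq hρ hρq x₀ n
    (f := fun x => X.cutoff x₀ R₁ R₂ x * u x ^ α)
    (fun x => mul_nonneg (MetricGraph.cutoff_nonneg _ _ _ x) (hpow x α)) fun x hx => by
      rw [MetricGraph.cutoff_eq_zero hR fun hx' => hx (MetricGraph.ball_subset_ball x₀ hRn hx'),
        zero_mul]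
  have hcac := hu.dSum_cutoff_mul_rpow_le hR hRn hm hm1 hαm
  have hholder := sum_mul_le_card_rpow_mul_nrm_mul (f := mu X.nbr X.ω)
    (g := fun x => u x ^ (2 * α)) hp (MetricGraph.ball_subset_ball x₀ (by linarith : R₂ + 1 ≤ n))
    hne mu_nonneg fun x => hpow x (2 * α)
  simp only [← Real.rpow_mul (hu.pos _).le] at hholder
  rw [sum_rpow_rpow_eq_card_rpow_mul_nrm hne q nu_nonneg] at hsob
  set b : ℝ := (#(X.ball x₀ n) : ℝ)
  set Nμ := nrm (X.ball x₀ n) p (mu X.nbr X.ω)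
  set Nν := nrm (X.ball x₀ n) q (nu X.nbr X.ω)
  set S := (∑ x ∈ X.ball x₀ (R₂ + 1), u x ^ (2 * α * p')) ^ (1 / p')
  have hS : 0 ≤ S := Real.rpow_nonneg (sum_nonneg fun x _ => hpow x _) _
  have hNν : 0 ≤ Nν := nrm_nonneg _ _ _
  set E := 28 * (1 + α ^ 2) / m ^ 2 / (R₂ - R₁) ^ 2
  have : 0 ≤ E := by positivity
  calc (∑ x ∈ X.ball x₀ R₁, u x ^ (2 * α * ρ)) ^ (1 / ρ) ≤ _ :=
        Real.rpow_le_rpow (sum_nonneg fun x _ => hpow x _) hlow (by positivity)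
    _ ≤ _ := hsob
    _ ≤ 4 * sobolevConst d C c ^ 2 * (1 + ρ / q') ^ 2 * (b ^ (1 / q) * Nν) *
          (E * (b ^ (1 / p) * Nμ * S)) := by
        gcongr
        exact hcac.trans (by gcongr)
    _ = 4 * sobolevConst d C c ^ 2 * (1 + ρ / q') ^ 2 * E * b ^ (1 / p + 1 / q) * (Nμ * Nν) *
          S := by
        rw [Real.rpow_add hcard]
        ring
    _ ≤ _ := by gcongr

lemma PosHarmonicOn.rpow_avg_rpow_le_of_le (hvol : X.VolumeRegular d C)
    (hiso : X.RelIsoperimetric c) (hc : 0 < c) (hd : 2 ≤ d) (hp : p.HolderConjugate p')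
    (hq : q.HolderConjugate q') (hρ : 0 < ρ) (hρq : 1 / ρ = 1 - 2 / (d : ℝ) + 1 / q)
    (hu : X.PosHarmonicOn (X.ball x₀ n) u) (hn : 1 ≤ n) (hm : 0 < m) (hm1 : m ≤ 1)
    (hαm : m ≤ |2 * α - 1|) {σ' σ : ℝ} (hσ : σ ≤ 1) (hσσ' : 2 ≤ (σ - σ') * n) :
    ((#(X.ball x₀ n) : ℝ)⁻¹ * ∑ x ∈ X.ball x₀ (σ' * n), u x ^ (2 * α * ρ)) ^ (1 / ρ) ≤
      4 * sobolevConst d C c ^ 2 * (1 + ρ / q') ^ 2 * (112 / m ^ 2) * C ^ (2 / (d : ℝ)) *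
        X.contrast p q x₀ n * (1 + α ^ 2) * (σ - σ')⁻¹ ^ 2 *
        ((#(X.ball x₀ n) : ℝ)⁻¹ * ∑ x ∈ X.ball x₀ (σ * n), u x ^ (2 * α * p')) ^ (1 / p') := by
  have hδ : 0 < σ - σ' := pos_of_mul_pos_left (two_pos.trans_le hσσ') (by linarith)
  have hcard : (0 : ℝ) < #(X.ball x₀ n) := by
    exact_mod_cast card_pos.2 ⟨x₀, MetricGraph.mem_ball_self x₀ (by linarith)⟩
  have hM := X.one_le_contrast p q x₀ n
  have := hp.symm.pos
  have hvol' := hvol.card_rpow_le (by omega) x₀ hn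
  have hmain := hu.rpow_sum_rpow_le hvol hiso hc hd hp hq hρ hρq hn
    (by linarith : σ' * n < σ * n - 1) (by nlinarith) hm hm1 hαm
  rw [sub_add_cancel] at hmain
  set b : ℝ := (#(X.ball x₀ n) : ℝ)
  set M := X.contrast p q x₀ n
  set S' := ∑ x ∈ X.ball x₀ (σ' * n), u x ^ (2 * α * ρ)
  set S := ∑ x ∈ X.ball x₀ (σ * n), u x ^ (2 * α * p')
  have hS' : 0 ≤ S' := sum_nonneg fun x _ => Real.rpow_nonneg (hu.pos x).le _
  have hS : 0 ≤ S := sum_nonneg fun x _ => Real.rpow_nonneg (hu.pos x).le _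
  have hgap : 28 * (1 + α ^ 2) / m ^ 2 / (σ * n - 1 - σ' * n) ^ 2 ≤
      112 / m ^ 2 * (1 + α ^ 2) * (σ - σ')⁻¹ ^ 2 / n ^ 2 := by
    calc _ ≤ 28 * (1 + α ^ 2) / m ^ 2 / ((σ - σ') * n / 2) ^ 2 := by gcongr; linarith
      _ = _ := by field_simp; ring
  have hexp : b⁻¹ ^ (1 / ρ) * b ^ (1 / p + 1 / q) = b ^ (2 / (d : ℝ)) * b⁻¹ ^ (1 / p') := by
    rw [Real.inv_rpow hcard.le, Real.inv_rpow hcard.le, ← Real.rpow_neg hcard.le,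
      ← Real.rpow_neg hcard.le, ← Real.rpow_add hcard, ← Real.rpow_add hcard, hρq]
    congr 1
    linear_combination hp.one_div_add_one_div
  set W := 4 * sobolevConst d C c ^ 2 * (1 + ρ / q') ^ 2
  have hW : 0 ≤ W := by positivity
  set G := 112 / m ^ 2 * (1 + α ^ 2) * (σ - σ')⁻¹ ^ 2 with hG
  rw [Real.mul_rpow (by positivity) hS', Real.mul_rpow (by positivity) hS]
  calc b⁻¹ ^ (1 / ρ) * S' ^ (1 / ρ)
      ≤ b⁻¹ ^ (1 / ρ) * (W * (G / n ^ 2) * b ^ (1 / p + 1 / q) * M * S ^ (1 / p')) := by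
        gcongr
        exact hmain.trans (by gcongr)
    _ = W * (G / n ^ 2) * M * S ^ (1 / p') * (b⁻¹ ^ (1 / ρ) * b ^ (1 / p + 1 / q)) := by ring
    _ = W * (G / n ^ 2) * M * S ^ (1 / p') * (b ^ (2 / (d : ℝ)) * b⁻¹ ^ (1 / p')) := by rw [hexp]
    _ ≤ W * (G / n ^ 2) * M * S ^ (1 / p') * (C ^ (2 / (d : ℝ)) * n ^ 2 * b⁻¹ ^ (1 / p')) := by
        gcongr
    _ = _ := by rw [hG]; field_simp

lemma avg_rpow_le_of_lt (hvol : X.VolumeRegular d C) (hp' : 0 < p') (hρ : p' ≤ ρ) (hn : 1 ≤ n)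
    (hu : ∀ x, 0 < u x) {σ' σ : ℝ} (hσ : σ' < σ) (hσσ' : (σ - σ') * n < 2) :
    (#(X.ball x₀ n) : ℝ)⁻¹ * ∑ x ∈ X.ball x₀ (σ' * n), u x ^ (2 * α * ρ) ≤
      (C * 2 ^ d * (σ - σ')⁻¹ ^ d) ^ (ρ / p' - 1) * ((#(X.ball x₀ n) : ℝ)⁻¹ *
        ∑ x ∈ X.ball x₀ (σ * n), u x ^ (2 * α * p')) ^ (ρ / p') := by
  have hχ : 1 ≤ ρ / p' := (one_le_div hp').2 hρ
  have hδ : 0 < σ - σ' := sub_pos.2 hσ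
  have := hvol.pos
  have hcard : (0 : ℝ) < #(X.ball x₀ n) := by
    exact_mod_cast card_pos.2 ⟨x₀, MetricGraph.mem_ball_self x₀ (by linarith)⟩
  have hpow : ∀ x (s : ℝ), 0 ≤ u x ^ s := fun x s => Real.rpow_nonneg (hu x).le s
  have hvol' : (#(X.ball x₀ n) : ℝ) ≤ C * 2 ^ d * (σ - σ')⁻¹ ^ d := by
    have hn2 : n ≤ 2 * (σ - σ')⁻¹ := by
      rw [← div_eq_mul_inv, le_div_iff₀ hδ]
      linarith
    calc _ ≤ C * n ^ d := (hvol x₀ n hn).2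
      _ ≤ C * (2 * (σ - σ')⁻¹) ^ d := by gcongr
      _ = _ := by rw [mul_pow, mul_assoc]
  set b : ℝ := (#(X.ball x₀ n) : ℝ)
  set S := ∑ x ∈ X.ball x₀ (σ * n), u x ^ (2 * α * p')
  have hS : 0 ≤ S := sum_nonneg fun x _ => hpow x _
  have hsum : ∑ x ∈ X.ball x₀ (σ' * n), u x ^ (2 * α * ρ) ≤ S ^ (ρ / p') := by
    calc _ ≤ ∑ x ∈ X.ball x₀ (σ * n), u x ^ (2 * α * ρ) :=
          sum_le_sum_of_subset_of_nonneg (MetricGraph.ball_subset_ball x₀ (by gcongr))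
            fun x _ _ => hpow x _
      _ = ∑ x ∈ X.ball x₀ (σ * n), (u x ^ (2 * α * p')) ^ (ρ / p') := by
          refine sum_congr rfl fun x _ => ?_
          rw [← Real.rpow_mul (hu x).le, mul_assoc _ p', mul_div_cancel₀ ρ hp'.ne']
      _ ≤ S ^ (ρ / p') := sum_rpow_le_rpow_sum hχ _ fun x => hpow x _
  calc b⁻¹ * ∑ x ∈ X.ball x₀ (σ' * n), u x ^ (2 * α * ρ) ≤ b⁻¹ * S ^ (ρ / p') := by gcongr
    _ = b ^ (ρ / p' - 1) * (b⁻¹ * S) ^ (ρ / p') := by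
        rw [Real.mul_rpow (by positivity) hS, Real.rpow_sub_one hcard.ne', Real.inv_rpow hcard.le]
        field_simp
    _ ≤ _ := by gcongr

-- Radii at distance at least `2 / n` are handled by the Sobolev and Caccioppoli inequalities;
-- for closer radii the ball has so few points that the embedding of `ℓ¹` into `ℓ^χ` suffices.
lemma PosHarmonicOn.avg_rpow_le (hvol : X.VolumeRegular d C) (hiso : X.RelIsoperimetric c)
    (hc : 0 < c) (hd : 2 ≤ d) (hp : p.HolderConjugate p') (hq : q.HolderConjugate q')
    (hρq : 1 / ρ = 1 - 2 / (d : ℝ) + 1 / q) (hρ : p' ≤ ρ)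
    (hu : X.PosHarmonicOn (X.ball x₀ n) u) (hn : 1 ≤ n) (hm : 0 < m) (hm1 : m ≤ 1)
    (hαm : m ≤ |2 * α - 1|) {σ' σ : ℝ} (hσ' : 0 ≤ σ') (hσσ' : σ' < σ) (hσ : σ ≤ 1) :
    (#(X.ball x₀ n) : ℝ)⁻¹ * ∑ x ∈ X.ball x₀ (σ' * n), u x ^ (2 * α * ρ) ≤
      (gainConst d C c q' ρ m * X.contrast p q x₀ n * (1 + α ^ 2) * (σ - σ')⁻¹ ^ (d + 2)) ^ ρ *
        ((#(X.ball x₀ n) : ℝ)⁻¹ * ∑ x ∈ X.ball x₀ (σ * n), u x ^ (2 * α * p')) ^ (ρ / p') := by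
  have hp' := hp.symm.pos
  have hρ0 : 0 < ρ := hp'.trans_le hρ
  have hC := hvol.pos
  have hδ : 1 ≤ (σ - σ')⁻¹ := (one_le_inv₀ (sub_pos.2 hσσ')).2 (by linarith)
  have hM := X.one_le_contrast p q x₀ n
  have hK₁ : 0 ≤ 4 * sobolevConst d C c ^ 2 * (1 + ρ / q') ^ 2 * (112 / m ^ 2) *
    C ^ (2 / (d : ℝ)) := by positivity
  have hK₂ : 0 ≤ C * 2 ^ d := by positivity
  set A' := (#(X.ball x₀ n) : ℝ)⁻¹ * ∑ x ∈ X.ball x₀ (σ' * n), u x ^ (2 * α * ρ)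
  set A := (#(X.ball x₀ n) : ℝ)⁻¹ * ∑ x ∈ X.ball x₀ (σ * n), u x ^ (2 * α * p')
  have hA' : 0 ≤ A' := mul_nonneg (by positivity)
    (sum_nonneg fun x _ => Real.rpow_nonneg (hu.pos x).le _)
  have hA : 0 ≤ A := mul_nonneg (by positivity)
    (sum_nonneg fun x _ => Real.rpow_nonneg (hu.pos x).le _)
  set F := gainConst d C c q' ρ m * X.contrast p q x₀ n * (1 + α ^ 2) * (σ - σ')⁻¹ ^ (d + 2)
    with hF
  have hF_of_le : ∀ {k K}, k ≤ d + 2 → 0 ≤ K → K ≤ gainConst d C c q' ρ m →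
      K * X.contrast p q x₀ n * (1 + α ^ 2) * (σ - σ')⁻¹ ^ k ≤ F := fun hk h0 hK => by
    have := h0.trans hK
    rw [hF]
    gcongr
  have hF1 : 1 ≤ F := by
    refine le_trans ?_ (hF_of_le (Nat.zero_le _) zero_le_one (by unfold gainConst; linarith))
    rw [one_mul, pow_zero, mul_one]
    exact one_le_mul_of_one_le_of_one_le hM (by nlinarith)
  rcases le_or_gt 2 ((σ - σ') * n) with hfar | hnear
  · refine le_rpow_mul_rpow_div hA' hA (by linarith) hρ0 ?_
    refine (hu.rpow_avg_rpow_le_of_le hvol hiso hc hd hp hq hρ0 hρq hn hm hm1 hαm hσ hfar).trans ?_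
    gcongr
    exact hF_of_le (by omega) hK₁ (by unfold gainConst; linarith)
  · have hbase : C * 2 ^ d * (σ - σ')⁻¹ ^ d ≤ F := by
      refine le_trans ?_ (hF_of_le (by omega : d ≤ d + 2) hK₂ (by unfold gainConst; linarith))
      gcongr ?_ * _
      rw [mul_assoc (C * 2 ^ d)]
      exact le_mul_of_one_le_right hK₂ (one_le_mul_of_one_le_of_one_le hM (by nlinarith))
    have hχ : 0 ≤ ρ / p' - 1 := sub_nonneg.2 ((one_le_div hp').2 hρ)
    refine (avg_rpow_le_of_lt hvol hp' hρ hn hu.pos hσσ' hnear).trans ?_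
    gcongr
    calc _ ≤ F ^ (ρ / p' - 1) := by gcongr
      _ ≤ F ^ ρ := Real.rpow_le_rpow_of_exponent_le hF1
          (by linarith [div_le_self hρ0.le hp.symm.lt.le])

end WeightedGraph

/-! ### The Moser and Bombieri–Giusti iterations -/

lemma le_pow_mul_of_le_add_mul {a : ℕ → ℝ} {χ μ r : ℝ} (hχ : 1 < χ) (hμ : 0 ≤ μ) (hr : 0 ≤ r)
    (h : ∀ j : ℕ, a (j + 1) ≤ μ + j * r + χ * a j) (j : ℕ) :
    a j ≤ χ ^ j * (a 0 + (χ - 1)⁻¹ * μ + (χ - 1)⁻¹ ^ 2 * r) := by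
  set c := (χ - 1)⁻¹
  have : 0 < c := inv_pos.2 (sub_pos.2 hχ)
  have hχc : χ * c = 1 + c := by linarith [mul_inv_cancel₀ (sub_pos.2 hχ).ne']
  -- The added terms solve the recursion with equality.
  suffices a j + c * μ + (c * j + c ^ 2) * r ≤ χ ^ j * (a 0 + c * μ + c ^ 2 * r) by
    have : 0 ≤ c * μ + (c * j + c ^ 2) * r := by positivity
    linarith
  induction j with
  | zero => simp
  | succ j ih =>
    calc a (j + 1) + c * μ + (c * (j + 1 : ℕ) + c ^ 2) * r
        ≤ χ * a j + (1 + c) * μ + (1 + c) * (j + c) * r := by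
          push_cast
          linarith [h j]
      _ = χ * (a j + c * μ + (c * j + c ^ 2) * r) := by
          rw [← hχc]
          ring
      _ ≤ χ * (χ ^ j * (a 0 + c * μ + c ^ 2 * r)) := by gcongr
      _ = _ := by ring

lemma exists_mul_zpow_mem {a t χ : ℝ} (ha : 0 < a) (ht : 0 < t) (hχ : 1 < χ) :
    ∃ j : ℤ, a * χ ^ j ≤ t ∧ t < a * χ ^ j * χ := by
  obtain ⟨j, hj, hj'⟩ := exists_mem_Ico_zpow (div_pos ht ha) hχ
  rw [le_div_iff₀' ha] at hj
  rw [div_lt_iff₀' ha, zpow_add_one₀ (one_pos.trans hχ).ne', ← mul_assoc] at hj'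
  exact ⟨j, hj, hj'⟩

lemma le_of_forall_pow_mul_le {a q B χ : ℝ} (hχ : 1 < χ)
    (h : ∀ j : ℕ, χ ^ j * a ≤ B + χ ^ j * q) : a ≤ q := by
  by_contra! hqa
  obtain ⟨j, hj⟩ := pow_unbounded_of_one_lt (B / (a - q)) hχ
  rw [div_lt_iff₀ (sub_pos.2 hqa)] at hj
  linarith [h j]

section BombieriGiusti

variable {V : Type*}

/-- The exponential moment of order `s` of `ℓ` over `D`, normalized by `b`. -/
def expMoment (b : ℝ) (D : Finset V) (ℓ : V → ℝ) (s : ℝ) : ℝ :=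
  b⁻¹ * ∑ x ∈ D, Real.exp (s * ℓ x)

/-- Moser's one-step estimate for the exponent `s`: moments of order `s * χ` are controlled by
moments of order `s` over a larger member of the increasing family `D`. -/
def GainOfIntegrability (D : ℝ → Finset V) (ℓ : V → ℝ) (b A χ ρ : ℝ) (k : ℕ) (s : ℝ) : Prop :=
  ∀ ⦃σ' σ : ℝ⦄, 1 / 2 ≤ σ' → σ' < σ → σ ≤ 3 / 4 →
    expMoment b (D σ') ℓ (s * χ) ≤
      (A * (1 + s ^ 2) * (σ - σ')⁻¹ ^ k) ^ ρ * expMoment b (D σ) ℓ s ^ χ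

/-- The constant produced by Moser iteration. -/
def moserConst (χ ρ : ℝ) (k : ℕ) : ℝ :=
  (2 ^ (k + 1)) ^ (ρ / (χ - 1)) * (χ ^ 2 * 2 ^ k) ^ (ρ / (χ - 1) ^ 2)

/-- The constant produced by the Bombieri–Giusti iteration. -/
def bombieriGiustiConst (χ ρ : ℝ) (k : ℕ) : ℝ :=
  2 * (2 * moserConst χ ρ k) ^ (2 * χ) *
    (4 * (1 - (3 / 4) ^ (1 / (2 * χ * ρ * k / (χ - 1))))⁻¹) ^ (2 * χ * ρ * k / (χ - 1))

variable {D : ℝ → Finset V} {ℓ : V → ℝ} {b A χ ρ s T Ψ σ σ' : ℝ} {k : ℕ} {x : V}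

lemma expMoment_pos {B : Finset V} (hb : 0 < b) (hx : x ∈ B) : 0 < expMoment b B ℓ s :=
  mul_pos (inv_pos.2 hb) (sum_pos (fun _ _ => Real.exp_pos _) ⟨x, hx⟩)

lemma exp_le_mul_expMoment {B : Finset V} (hb : 0 < b) (hx : x ∈ B) :
    Real.exp (s * ℓ x) ≤ b * expMoment b B ℓ s := by
  rw [expMoment, mul_inv_cancel_left₀ hb.ne']
  exact single_le_sum (f := fun y => Real.exp (s * ℓ y)) (fun _ _ => (Real.exp_pos _).le) hx

lemma one_le_moserConst (hχ : 1 < χ) (hρ : 0 < ρ) : 1 ≤ moserConst χ ρ k := by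
  have := sub_pos.2 hχ
  exact one_le_mul_of_one_le_of_one_le
    (Real.one_le_rpow (one_le_pow₀ one_le_two) (by positivity))
    (Real.one_le_rpow (one_le_mul_of_one_le_of_one_le (one_le_pow₀ hχ.le)
      (one_le_pow₀ one_le_two)) (by positivity))

lemma log_moserConst_mul_rpow (hχ : 0 < χ) {a : ℝ} (ha : 0 < a) :
    Real.log (moserConst χ ρ k * a ^ (ρ / (χ - 1))) =
      (χ - 1)⁻¹ * (ρ * Real.log (2 ^ (k + 1) * a)) +
        (χ - 1)⁻¹ ^ 2 * (ρ * Real.log (χ ^ 2 * 2 ^ k)) := by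
  rw [moserConst, Real.log_mul (by positivity) (by positivity),
    Real.log_mul (by positivity) (by positivity), Real.log_rpow (by positivity),
    Real.log_rpow (by positivity), Real.log_rpow (by positivity),
    Real.log_mul (by positivity) ha.ne']
  generalize χ - 1 = c
  ring

lemma GainOfIntegrability.expMoment_dyadic_le {j : ℕ}
    (h : GainOfIntegrability D ℓ b A χ ρ k (s * χ ^ j)) (hb : 0 < b) (hA : 1 ≤ A) (hχ : 1 < χ)
    (hρ : 0 < ρ) (hs : |s| ≤ 1) (hσ' : 1 / 2 ≤ σ') (hσσ' : σ' < σ) (hσ : σ ≤ 3 / 4) :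
    expMoment b (D (σ' + (σ - σ') / 2 ^ (j + 1))) ℓ (s * χ ^ (j + 1)) ≤
      (2 ^ (k + 1) * (A * (σ - σ')⁻¹ ^ k)) ^ ρ * ((χ ^ 2 * 2 ^ k) ^ ρ) ^ j *
        expMoment b (D (σ' + (σ - σ') / 2 ^ j)) ℓ (s * χ ^ j) ^ χ := by
  have hδ : 0 < σ - σ' := sub_pos.2 hσσ'
  have hgap : σ' + (σ - σ') / 2 ^ j - (σ' + (σ - σ') / 2 ^ (j + 1)) =
      (σ - σ') / 2 ^ (j + 1) := by
    rw [pow_succ]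
    ring
  have hstep := h (σ' := σ' + (σ - σ') / 2 ^ (j + 1)) (σ := σ' + (σ - σ') / 2 ^ j)
    (by linarith [show 0 < (σ - σ') / 2 ^ (j + 1) by positivity])
    (by linarith [show 0 < (σ - σ') / 2 ^ (j + 1) by positivity])
    (by linarith [div_le_self hδ.le (one_le_pow₀ one_le_two : (1 : ℝ) ≤ 2 ^ j)])
  rw [hgap, mul_assoc s, ← pow_succ] at hstep
  have hexp : 1 + (s * χ ^ j) ^ 2 ≤ 2 * (χ ^ 2) ^ j := by
    have hs2 : s ^ 2 ≤ 1 := (sq_le_one_iff_abs_le_one s).2 hs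
    have hχj : (1 : ℝ) ≤ (χ ^ 2) ^ j := one_le_pow₀ (one_le_pow₀ hχ.le)
    rw [mul_pow, pow_right_comm]
    nlinarith
  refine hstep.trans (mul_le_mul_of_nonneg_right ?_
    (Real.rpow_nonneg (mul_nonneg (by positivity) (sum_nonneg fun _ _ => (Real.exp_pos _).le)) _))
  calc _ ≤ (A * (2 * (χ ^ 2) ^ j) * ((σ - σ') / 2 ^ (j + 1))⁻¹ ^ k) ^ ρ := by gcongr
    _ = (2 ^ (k + 1) * (A * (σ - σ')⁻¹ ^ k) * (χ ^ 2 * 2 ^ k) ^ j) ^ ρ := by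
        congr 1
        rw [inv_div, div_eq_mul_inv, mul_pow, mul_pow, ← pow_mul, ← pow_mul, ← pow_mul,
          add_one_mul, pow_add, pow_succ, mul_comm j k]
        ring
    _ = _ := by
        rw [Real.mul_rpow (by positivity) (by positivity), Real.rpow_pow_comm (by positivity)]

theorem exp_le_moserConst_mul_expMoment (hD : Monotone D) (hb : 0 < b) (hA : 1 ≤ A) (hχ : 1 < χ)
    (hρ : 0 < ρ) (hs : |s| ≤ 1) (h : ∀ j : ℕ, GainOfIntegrability D ℓ b A χ ρ k (s * χ ^ j))
    (hσ' : 1 / 2 ≤ σ') (hσσ' : σ' < σ) (hσ : σ ≤ 3 / 4) (hx : x ∈ D σ') :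
    Real.exp (s * ℓ x) ≤
      moserConst χ ρ k * (A * (σ - σ')⁻¹ ^ k) ^ (ρ / (χ - 1)) * expMoment b (D σ) ℓ s := by
  have hδ : 1 ≤ (σ - σ')⁻¹ := (one_le_inv₀ (sub_pos.2 hσσ')).2 (by linarith)
  set Λ := 2 ^ (k + 1) * (A * (σ - σ')⁻¹ ^ k)
  set R := χ ^ 2 * 2 ^ k
  have hΛ : 1 ≤ Λ := one_le_mul_of_one_le_of_one_le
    (one_le_pow₀ one_le_two) (one_le_mul_of_one_le_of_one_le hA (one_le_pow₀ hδ))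
  have hR : 1 ≤ R := one_le_mul_of_one_le_of_one_le (one_le_pow₀ hχ.le)
    (one_le_pow₀ one_le_two)
  set N : ℕ → ℝ := fun j => expMoment b (D (σ' + (σ - σ') / 2 ^ j)) ℓ (s * χ ^ j) with hN
  have hxD : ∀ j : ℕ, x ∈ D (σ' + (σ - σ') / 2 ^ j) := fun j =>
    hD (le_add_of_nonneg_right (div_nonneg (sub_pos.2 hσσ').le (by positivity))) hx
  have hNpos : ∀ j, 0 < N j := fun j => expMoment_pos hb (hxD j)
  have hrec : ∀ j : ℕ, Real.log (N (j + 1)) ≤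
      ρ * Real.log Λ + j * (ρ * Real.log R) + χ * Real.log (N j) := fun j => by
    have hj := Real.log_le_log (hNpos (j + 1))
      ((h j).expMoment_dyadic_le hb hA hχ hρ hs hσ' hσσ' hσ)
    rwa [Real.log_mul (by positivity) (Real.rpow_pos_of_pos (hNpos j) χ).ne',
      Real.log_mul (by positivity) (by positivity), Real.log_pow, Real.log_rpow (by positivity),
      Real.log_rpow (by positivity), Real.log_rpow (hNpos j)] at hj
  have hlim : s * ℓ x ≤ Real.log (N 0) + (χ - 1)⁻¹ * (ρ * Real.log Λ) +
      (χ - 1)⁻¹ ^ 2 * (ρ * Real.log R) := by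
    refine le_of_forall_pow_mul_le (B := Real.log b) hχ fun j => ?_
    have hexp := Real.log_le_log (Real.exp_pos _)
      (exp_le_mul_expMoment (ℓ := ℓ) (s := s * χ ^ j) hb (hxD j))
    rw [Real.log_exp, Real.log_mul hb.ne' (hNpos j).ne'] at hexp
    have hmom := le_pow_mul_of_le_add_mul (a := fun j => Real.log (N j)) hχ
      (mul_nonneg hρ.le (Real.log_nonneg hΛ)) (mul_nonneg hρ.le (Real.log_nonneg hR)) hrec j
    linarith
  have hN0 : N 0 = expMoment b (D σ) ℓ s := by
    simp only [hN, pow_zero, div_one, mul_one, add_sub_cancel]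
  have hA' : 0 < A * (σ - σ')⁻¹ ^ k := by positivity
  have hQ : 0 < moserConst χ ρ k * (A * (σ - σ')⁻¹ ^ k) ^ (ρ / (χ - 1)) :=
    mul_pos (one_pos.trans_le (one_le_moserConst hχ hρ)) (by positivity)
  rw [← hN0, ← Real.le_log_iff_exp_le (mul_pos hQ (hNpos 0)), Real.log_mul hQ.ne' (hNpos 0).ne',
    log_moserConst_mul_rpow (one_pos.trans hχ) hA']
  linarith

lemma expMoment_le_two_mul_exp {B : Finset V} (hb : 0 < b) (hBb : #B ≤ b) (hT : 0 < T)
    (hΨ : 0 < Ψ) (hs : 0 < s) (hosc : ∑ x ∈ B, |ℓ x| ≤ b * T) (hle : ∀ x ∈ B, ℓ x ≤ Ψ)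
    (hsΨ : s * Ψ / 2 ≤ Real.log (Ψ / (2 * T))) :
    expMoment b B ℓ s ≤ 2 * Real.exp (s * Ψ / 2) := by
  set E := Real.exp (s * Ψ / 2)
  have hE : 0 < E := Real.exp_pos _
  have hexp : Real.exp (s * Ψ) = E * E := by
    rw [← Real.exp_add, add_halves]
  have hEle : E ≤ Ψ / (2 * T) := by rwa [← Real.le_log_iff_exp_le (by positivity)]
  have hpoint : ∀ x ∈ B, Real.exp (s * ℓ x) ≤ E + 2 / Ψ * (E * E) * |ℓ x| := by
    intro x hx
    rcases le_or_gt (ℓ x) (Ψ / 2) with hsmall | hlarge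
    · refine (Real.exp_le_exp.2 ?_).trans (le_add_of_nonneg_right (by positivity))
      rw [mul_div_assoc]
      gcongr
    · calc Real.exp (s * ℓ x) ≤ Real.exp (s * Ψ) := by
            gcongr
            exact hle x hx
        _ = 2 / Ψ * (E * E) * (Ψ / 2) := by
            rw [hexp]
            field_simp
        _ ≤ 2 / Ψ * (E * E) * |ℓ x| := by
            gcongr
            exact hlarge.le.trans (le_abs_self _)
        _ ≤ _ := le_add_of_nonneg_left hE.le
  calc expMoment b B ℓ s ≤ b⁻¹ * ∑ x ∈ B, (E + 2 / Ψ * (E * E) * |ℓ x|) :=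
        mul_le_mul_of_nonneg_left (sum_le_sum hpoint) (by positivity)
    _ = b⁻¹ * (#B * E + 2 / Ψ * (E * E) * ∑ x ∈ B, |ℓ x|) := by
        rw [sum_add_distrib, ← mul_sum, sum_const, nsmul_eq_mul]
    _ ≤ b⁻¹ * (b * E + 2 / Ψ * (E * (Ψ / (2 * T))) * (b * T)) := by gcongr
    _ = 2 * E := by
        field_simp
        norm_num

-- The exponent `s` is chosen comparable to `log (Ψ / T) / Ψ`: then the points where `ℓ > Ψ / 2`
-- do not dominate the moment of order `s`, and Moser iteration loses only a small multiple of `Ψ`.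
lemma le_three_quarters_mul (hD : Monotone D) (hb : 0 < b) (hDb : #(D (3 / 4)) ≤ b) (hA : 1 ≤ A)
    (hT : 1 ≤ T) (hχ : 1 < χ) (hρ : 0 < ρ) {a : ℝ} (ha : 0 < a)
    (h : ∀ j : ℤ, GainOfIntegrability D ℓ b A χ ρ k (a * χ ^ j))
    (hosc : ∑ x ∈ D (3 / 4), |ℓ x| ≤ b * T) (hσ' : 1 / 2 ≤ σ') (hσσ' : σ' < σ) (hσ : σ ≤ 3 / 4)
    (hΨ : 2 * T * (2 * (moserConst χ ρ k * (A * (σ - σ')⁻¹ ^ k) ^ (ρ / (χ - 1)))) ^ (2 * χ) ≤ Ψ)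
    (hle : ∀ x ∈ D σ, ℓ x ≤ Ψ) (hx : x ∈ D σ') :
    ℓ x ≤ 3 / 4 * Ψ := by
  have hδ : 0 < σ - σ' := sub_pos.2 hσσ'
  have hχ0 : 0 < χ := one_pos.trans hχ
  set Q := moserConst χ ρ k * (A * (σ - σ')⁻¹ ^ k) ^ (ρ / (χ - 1))
  have hQ : 1 ≤ Q := one_le_mul_of_one_le_of_one_le (one_le_moserConst hχ hρ) <|
    Real.one_le_rpow (one_le_mul_of_one_le_of_one_le hA (one_le_pow₀ ((one_le_inv₀ hδ).2
      (by linarith)))) (div_nonneg hρ.le (sub_pos.2 hχ).le)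
  have hΨ0 : 0 < Ψ := lt_of_lt_of_le (by positivity) hΨ
  set ξ := Real.log (Ψ / (2 * T))
  have hξQ : 2 * χ * Real.log (2 * Q) ≤ ξ := by
    rw [← Real.log_rpow (by positivity)]
    exact Real.log_le_log (by positivity) ((le_div_iff₀' (by positivity)).2 hΨ)
  have hξ : 0 < ξ := lt_of_lt_of_le
    (mul_pos (by positivity) (Real.log_pos (by linarith))) hξQ
  have hξΨ : 2 * ξ / Ψ ≤ 1 := by
    have hlog : ξ ≤ Ψ / (2 * T) := (Real.log_le_sub_one_of_pos (by positivity)).trans (by linarith)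
    rw [div_le_one hΨ0]
    rw [le_div_iff₀ (by positivity)] at hlog
    nlinarith
  obtain ⟨j, hj, hj'⟩ := exists_mul_zpow_mem ha (by positivity : 0 < 2 * ξ / Ψ) hχ
  have hgain : ∀ i : ℕ, GainOfIntegrability D ℓ b A χ ρ k (a * χ ^ j * χ ^ i) := fun i => by
    simpa only [mul_assoc, zpow_add₀ hχ0.ne', zpow_natCast] using h (j + i)
  set s := a * χ ^ j
  have hs : 0 < s := by positivity
  have hmoser := exp_le_moserConst_mul_expMoment hD hb hA hχ hρ
    ((abs_of_pos hs).trans_le (hj.trans hξΨ)) hgain hσ' hσσ' hσ hx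
  rw [le_div_iff₀ hΨ0] at hj
  rw [div_lt_iff₀ hΨ0] at hj'
  have hmoment := expMoment_le_two_mul_exp hb ((Nat.cast_le.2 (card_le_card (hD hσ))).trans hDb)
    (one_pos.trans_le hT) hΨ0 hs ((sum_le_sum_of_subset_of_nonneg (hD hσ)
      fun _ _ _ => abs_nonneg _).trans hosc) hle (by linarith)
  have hfin := hmoser.trans (mul_le_mul_of_nonneg_left hmoment (by positivity))
  rw [← mul_assoc, mul_comm _ 2, ← Real.le_log_iff_exp_le (by positivity),
    Real.log_mul (by positivity) (Real.exp_pos _).ne', Real.log_exp] at hfin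
  have hlog : Real.log (2 * Q) ≤ s * (Ψ / 4) := by
    refine le_of_mul_le_mul_left ?_ (by positivity : 0 < 2 * χ)
    linarith
  refine le_of_mul_le_mul_left ?_ hs
  linarith

lemma le_of_improvement {W K : ℝ} (hW : 0 < W) (hK : 0 < K) (hD : Monotone D)
    (himp : ∀ ⦃σ' σ Ψ : ℝ⦄, 1 / 2 ≤ σ' → σ' < σ → σ ≤ 3 / 4 → W * (σ - σ')⁻¹ ^ K ≤ Ψ →
      (∀ x ∈ D σ, ℓ x ≤ Ψ) → ∀ x ∈ D σ', ℓ x ≤ 3 / 4 * Ψ) (hx : x ∈ D (1 / 2)) :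
    ℓ x ≤ W * (4 * (1 - (3 / 4) ^ (1 / K))⁻¹) ^ K := by
  set θ : ℝ := (3 / 4) ^ (1 / K) with hθ
  have hθ0 : 0 < θ := by positivity
  have hθ1 : θ < 1 := Real.rpow_lt_one (by norm_num) (by norm_num) (by positivity)
  have hθK : ∀ i : ℕ, ((θ ^ i)⁻¹) ^ K = (4 / 3) ^ i := fun i => by
    rw [Real.inv_rpow (by positivity), ← Real.rpow_pow_comm hθ0.le, hθ,
      ← Real.rpow_mul (by norm_num), one_div_mul_cancel hK.ne', Real.rpow_one, ← inv_pow]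
    norm_num
  have h1θ : 0 < 1 - θ := sub_pos.2 hθ1
  set Y := W * (4 * (1 - θ)⁻¹) ^ K with hY
  have hY0 : 0 < Y := by positivity
  have hdown : ∀ i : ℕ, (∀ y ∈ D (3 / 4 - 1 / 4 * θ ^ (i + 1)), ℓ y ≤ (4 / 3) ^ (i + 1) * Y) →
      ∀ y ∈ D (3 / 4 - 1 / 4 * θ ^ i), ℓ y ≤ (4 / 3) ^ i * Y := by
    intro i hi y hy
    have hθi : θ ^ i ≤ 1 := pow_le_one₀ hθ0.le hθ1.le
    have hgap : 3 / 4 - 1 / 4 * θ ^ (i + 1) - (3 / 4 - 1 / 4 * θ ^ i) =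
        1 / 4 * θ ^ i * (1 - θ) := by ring
    have hpos : 0 < 1 / 4 * θ ^ i * (1 - θ) := by positivity
    have hthr : W * (3 / 4 - 1 / 4 * θ ^ (i + 1) - (3 / 4 - 1 / 4 * θ ^ i))⁻¹ ^ K ≤
        (4 / 3) ^ (i + 1) * Y := by
      have hinv : (1 / 4 * θ ^ i * (1 - θ))⁻¹ = 4 * (1 - θ)⁻¹ * (θ ^ i)⁻¹ := by
        field_simp
      rw [hgap, hinv, Real.mul_rpow (by positivity) (by positivity), hθK, ← mul_assoc, ← hY,
        mul_comm]
      gcongr <;> norm_num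
    refine (himp (by linarith) (by linarith) (sub_le_self _ (by positivity)) hthr hi y hy).trans_eq
      ?_
    ring
  obtain ⟨I, hI⟩ := pow_unbounded_of_one_lt ((∑ y ∈ D (3 / 4), |ℓ y|) / Y)
    (by norm_num : (1 : ℝ) < 4 / 3)
  rw [div_lt_iff₀ hY0] at hI
  have hlarge : ∀ y ∈ D (3 / 4 - 1 / 4 * θ ^ I), ℓ y ≤ (4 / 3) ^ I * Y := fun y hy =>
    (le_abs_self _).trans <| (single_le_sum (f := fun z => |ℓ z|) (fun _ _ => abs_nonneg _)
      (hD (sub_le_self _ (by positivity)) hy)).trans hI.le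
  have hzero := Nat.decreasingInduction
    (motive := fun i _ => ∀ y ∈ D (3 / 4 - 1 / 4 * θ ^ i), ℓ y ≤ (4 / 3) ^ i * Y)
    (fun i _ => hdown i) hlarge I.zero_le
  norm_num at hzero
  exact hzero x hx

theorem le_bombieriGiustiConst_mul (hD : Monotone D) (hb : 0 < b) (hDb : #(D (3 / 4)) ≤ b)
    (hA : 1 ≤ A) (hT : 1 ≤ T) (hχ : 1 < χ) (hρ : 0 < ρ) (hk : 0 < k) {a : ℝ} (ha : 0 < a)
    (h : ∀ j : ℤ, GainOfIntegrability D ℓ b A χ ρ k (a * χ ^ j))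
    (hosc : ∑ x ∈ D (3 / 4), |ℓ x| ≤ b * T) (hx : x ∈ D (1 / 2)) :
    ℓ x ≤ bombieriGiustiConst χ ρ k * T * A ^ (2 * χ * ρ / (χ - 1)) := by
  have : 0 < χ - 1 := sub_pos.2 hχ
  have hQ := one_le_moserConst (k := k) hχ hρ
  refine (le_of_improvement (W := 2 * T * (2 * moserConst χ ρ k) ^ (2 * χ) *
    A ^ (2 * χ * ρ / (χ - 1))) (K := 2 * χ * ρ * k / (χ - 1)) (by positivity) (by positivity) hD
    (fun σ' σ Ψ hσ' hσσ' hσ hΨ hle y hy => ?_) hx).trans_eq ?_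
  · refine le_three_quarters_mul hD hb hDb hA hT hχ hρ ha h hosc hσ' hσσ' hσ
      (le_trans (le_of_eq ?_) hΨ) hle hy
    have := sub_pos.2 hσσ'
    have hexp : ρ / (χ - 1) * (2 * χ) = 2 * χ * ρ / (χ - 1) := by ring
    have hexp' : k * (2 * χ * ρ / (χ - 1)) = 2 * χ * ρ * k / (χ - 1) := by ring
    rw [← mul_assoc 2, Real.mul_rpow (by positivity) (by positivity),
      ← Real.rpow_mul (by positivity), hexp,
      Real.mul_rpow (x := A) (by positivity) (by positivity),
      ← Real.rpow_natCast _ k, ← Real.rpow_mul (by positivity), hexp']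
    ring
  · rw [bombieriGiustiConst]
    ring

end BombieriGiusti

/-! ### Harnack inequalities -/

-- The exponents used in the iteration avoid the value `1/2`, where the Caccioppoli inequality
-- degenerates.
lemma one_sub_inv_sqrt_le_abs_mul_zpow_sub_one {χ ε : ℝ} (hχ : 1 < χ) (hε : |ε| = 1) (j : ℤ) :
    1 - (√χ)⁻¹ ≤ |ε * (√χ * χ ^ j) - 1| := by
  have : 0 < χ := one_pos.trans hχ
  have hχj : 0 < √χ * χ ^ j := by positivity
  have hdrop : |√χ * χ ^ j - 1| ≤ |ε * (√χ * χ ^ j) - 1| := by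
    simpa [abs_mul, hε, abs_of_pos hχj] using abs_abs_sub_abs_le (ε * (√χ * χ ^ j)) 1
  refine le_trans ?_ hdrop
  rcases le_or_gt 0 j with hj | hj
  · have hge : √χ ≤ √χ * χ ^ j := le_mul_of_one_le_right (by positivity) (one_le_zpow₀ hχ.le hj)
    have hsum : 2 ≤ √χ + (√χ)⁻¹ := by
      field_simp
      nlinarith [sq_nonneg (√χ - 1)]
    exact le_trans (by linarith) (le_abs_self _)
  · have hle : √χ * χ ^ j ≤ (√χ)⁻¹ := by
      calc √χ * χ ^ j ≤ √χ * χ⁻¹ := by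
            gcongr
            rw [← zpow_neg_one]
            exact zpow_le_zpow_right₀ hχ.le (by omega)
        _ = (√χ)⁻¹ := by rw [← div_eq_mul_inv, Real.sqrt_div_self', one_div]
    exact le_trans (by linarith) (neg_le_abs _)

lemma expMoment_mul_log_sub {V : Type*} {u : V → ℝ} (hu : ∀ x, 0 < u x) (b : ℝ) (B : Finset V)
    (ε a s : ℝ) :
    expMoment b B (fun x => ε * (Real.log (u x) - a)) s =
      Real.exp (-(ε * a * s)) * (b⁻¹ * ∑ x ∈ B, u x ^ (ε * s)) := by
  rw [expMoment, mul_left_comm, mul_sum _ _ (Real.exp _)]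
  congr 1
  refine sum_congr rfl fun x _ => ?_
  rw [Real.rpow_def_of_pos (hu x), ← Real.exp_add]
  ring_nf

lemma MetricGraph.le_pow_dist_mul {V : Type*} {X : MetricGraph V} {u : V → ℝ} {Q n : ℝ} {x₀ x : V}
    (hQ : 0 ≤ Q) (h : ∀ y ∈ X.ball x₀ n, ∀ z ∈ X.ball x₀ n, X.G.Adj y z → u y ≤ Q * u z)
    (hx : x ∈ X.ball x₀ n) :
    u x ≤ Q ^ X.G.dist x₀ x * u x₀ ∧ u x₀ ≤ Q ^ X.G.dist x₀ x * u x := by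
  induction hk : X.G.dist x₀ x generalizing x with
  | zero =>
    obtain rfl := X.connected.dist_eq_zero_iff.1 hk
    simp
  | succ k ih =>
    have hne : x ≠ x₀ := by
      rintro rfl
      simp at hk
    obtain ⟨z, hxz, hz⟩ := X.exists_adj_dist_add_one_eq hne
    have hzB : z ∈ X.ball x₀ n := by
      rw [X.mem_ball] at hx ⊢
      exact le_trans (by exact_mod_cast (by omega)) hx
    obtain ⟨hzx₀, hx₀z⟩ := ih hzB (by omega)
    rw [pow_succ]
    constructor
    · calc u x ≤ Q * u z := h x hx z hzB hxz
        _ ≤ Q * (Q ^ k * u x₀) := by gcongr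
        _ = _ := by ring
    · calc u x₀ ≤ Q ^ k * u z := hx₀z
        _ ≤ Q ^ k * (Q * u x) := by gcongr; exact h z hzB x hx hxz.symm
        _ = _ := by ring

/-- The constant of the two-sided bound for the logarithm of a positive harmonic function on a
large ball. -/
def logConst (d : ℕ) (C c p' q' ρ : ℝ) : ℝ :=
  bombieriGiustiConst (ρ / p') ρ (d + 2) * (21 * poincareConst C c) *
    gainConst d C c q' ρ (1 - (√(ρ / p'))⁻¹) ^ (2 * (ρ / p') * ρ / (ρ / p' - 1))

/-- The constant in the exponent of the Harnack inequality: the maximum of the constants for large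
and for small balls. -/
def harnackConst (d : ℕ) (C c p p' q q' ρ : ℝ) : ℝ :=
  max (2 * logConst d C c p' q' ρ) (8 * (C * 8 ^ d) ^ (1 / p + 1 / q))

/-- The power of the ellipticity contrast in the Harnack inequality. -/
def harnackExponent (p' ρ : ℝ) : ℝ := 1 + 2 * (ρ / p') * ρ / (ρ / p' - 1)

lemma one_le_harnackExponent {p' ρ : ℝ} (hp' : 0 < p') (hρ : p' < ρ) :
    1 ≤ harnackExponent p' ρ := by
  have := hp'.trans hρ
  have : 0 < ρ / p' - 1 := sub_pos.2 ((one_lt_div hp').2 hρ)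
  exact le_add_of_nonneg_right (by positivity)

namespace WeightedGraph

variable {V : Type*} {X : WeightedGraph V} {d : ℕ} {C c p p' q q' ρ : ℝ} {x₀ x y : V} {n : ℝ}
  {u : V → ℝ}

lemma le_mu_mul_nu_mul_of_adj (hu : ∀ z, 0 < u z) (hx : lap X.nbr X.ω u x = 0)
    (hxy : X.G.Adj x y) : u y ≤ mu X.nbr X.ω x * nu X.nbr X.ω x * u x := by
  have hy : y ∈ X.nbr x := (X.mem_nbr x y).2 hxy
  have hω : 0 < X.ω x y := X.pos x y hxy
  have hinv : (X.ω x y)⁻¹ ≤ nu X.nbr X.ω x :=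
    single_le_sum (f := fun z => (X.ω x z)⁻¹)
      (fun z _ => inv_nonneg.2 (weight_nonneg x z)) hy
  have hmean : ∑ z ∈ X.nbr x, X.ω x z * u z = mu X.nbr X.ω x * u x := by
    have hsum := sum_weight_mul_sub_eq_zero hx
    simp only [mul_sub, sum_sub_distrib] at hsum
    rw [mu, sum_mul]
    linarith
  have hflow : X.ω x y * u y ≤ mu X.nbr X.ω x * u x :=
    hmean ▸ single_le_sum (f := fun z => X.ω x z * u z)
      (fun z _ => mul_nonneg (weight_nonneg x z) (hu z).le) hy
  calc u y = (X.ω x y)⁻¹ * (X.ω x y * u y) := by field_simp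
    _ ≤ nu X.nbr X.ω x * (mu X.nbr X.ω x * u x) :=
        mul_le_mul hinv hflow (mul_nonneg hω.le (hu y).le) (nu_nonneg x)
    _ = _ := by ring

lemma PosHarmonicOn.le_mul_of_adj (hvol : X.VolumeRegular d C) (hp : 0 < p) (hq : 0 < q)
    (hu : X.PosHarmonicOn (X.ball x₀ n) u) (hn : 1 ≤ n) (hx : x ∈ X.ball x₀ n)
    (hxy : X.G.Adj x y) :
    u y ≤ (C * n ^ d) ^ (1 / p + 1 / q) * X.contrast p q x₀ n * u x := by
  have hb : (0 : ℝ) < #(X.ball x₀ n) := by exact_mod_cast card_pos.2 ⟨x, hx⟩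
  have hmu := le_card_rpow_mul_nrm hp (mu_nonneg (X := X)) hx
  have hnu := le_card_rpow_mul_nrm hq (nu_nonneg (X := X)) hx
  refine (le_mu_mul_nu_mul_of_adj hu.pos (hu.harmonic x hx) hxy).trans
    (mul_le_mul_of_nonneg_right ?_ (hu.pos x).le)
  set b : ℝ := (#(X.ball x₀ n) : ℝ)
  set Nμ := nrm (X.ball x₀ n) p (mu X.nbr X.ω)
  set Nν := nrm (X.ball x₀ n) q (nu X.nbr X.ω)
  calc mu X.nbr X.ω x * nu X.nbr X.ω x ≤ b ^ (1 / p) * Nμ * (b ^ (1 / q) * Nν) :=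
        mul_le_mul hmu hnu (nu_nonneg x) ((mu_nonneg x).trans hmu)
    _ = b ^ (1 / p + 1 / q) * (Nμ * Nν) := by
        rw [Real.rpow_add hb]
        ring
    _ ≤ (C * n ^ d) ^ (1 / p + 1 / q) * X.contrast p q x₀ n :=
        mul_le_mul (Real.rpow_le_rpow hb.le (hvol x₀ n hn).2 (by positivity))
          (X.nrm_mul_nrm_le_contrast p q x₀ n)
          (mul_nonneg (nrm_nonneg _ _ _) (nrm_nonneg _ _ _))
          (Real.rpow_nonneg (hb.le.trans (hvol x₀ n hn).2) _)

theorem PosHarmonicOn.le_exp_mul_of_le_eight (hvol : X.VolumeRegular d C) (hp : 0 < p)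
    (hq : 0 < q) (hu : X.PosHarmonicOn (X.ball x₀ n) u) (hn : 1 ≤ n) (hn8 : n ≤ 8)
    (hx : x ∈ X.ball x₀ (n / 2)) (hy : y ∈ X.ball x₀ (n / 2)) :
    u x ≤ Real.exp (8 * (C * 8 ^ d) ^ (1 / p + 1 / q) * X.contrast p q x₀ n) * u y := by
  have hC := hvol.pos
  have hM := X.one_le_contrast p q x₀ n
  set M := X.contrast p q x₀ n
  set Q := (C * 8 ^ d) ^ (1 / p + 1 / q) * M with hQ
  have hQ0 : 0 ≤ Q := by positivity
  have hadj : ∀ y ∈ X.ball x₀ n, ∀ z ∈ X.ball x₀ n, X.G.Adj y z → u y ≤ Q * u z :=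
    fun y _ z hz hyz => (hu.le_mul_of_adj hvol hp hq hn hz hyz.symm).trans (by
      have := (hu.pos z).le
      rw [hQ]
      gcongr)
  have hball : X.ball x₀ (n / 2) ⊆ X.ball x₀ n := MetricGraph.ball_subset_ball x₀ (by linarith)
  have hdist : ∀ {z}, z ∈ X.ball x₀ (n / 2) → (X.G.dist x₀ z : ℝ) ≤ 4 := fun hz =>
    ((X.mem_ball _ _ _).1 hz).trans (by linarith)
  have hsum := add_le_add (hdist hx) (hdist hy)
  calc u x ≤ Q ^ X.G.dist x₀ x * u x₀ := (MetricGraph.le_pow_dist_mul hQ0 hadj (hball hx)).1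
    _ ≤ Q ^ X.G.dist x₀ x * (Q ^ X.G.dist x₀ y * u y) := by
        gcongr
        exact (MetricGraph.le_pow_dist_mul hQ0 hadj (hball hy)).2
    _ = Q ^ (X.G.dist x₀ x + X.G.dist x₀ y) * u y := by ring
    _ ≤ Real.exp Q ^ (X.G.dist x₀ x + X.G.dist x₀ y) * u y := by
        have := (hu.pos y).le
        gcongr
        linarith [Real.add_one_le_exp Q]
    _ ≤ Real.exp (8 * Q) * u y := by
        rw [← Real.exp_nat_mul, Nat.cast_add]
        have := (hu.pos y).le
        gcongr
        linarith
    _ = _ := by rw [hQ, mul_assoc]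

lemma PosHarmonicOn.gainOfIntegrability (hvol : X.VolumeRegular d C) (hiso : X.RelIsoperimetric c)
    (hc : 0 < c) (hd : 2 ≤ d) (hp : p.HolderConjugate p') (hq : q.HolderConjugate q')
    (hρq : 1 / ρ = 1 - 2 / (d : ℝ) + 1 / q) (hρ : p' < ρ)
    (hu : X.PosHarmonicOn (X.ball x₀ n) u) (hn : 1 ≤ n) (a : ℝ) {ε : ℝ} (hε : |ε| = 1) (j : ℤ) :
    GainOfIntegrability (fun σ => X.ball x₀ (σ * n)) (fun x => ε * (Real.log (u x) - a))
      (#(X.ball x₀ n)) (gainConst d C c q' ρ (1 - (√(ρ / p'))⁻¹) * X.contrast p q x₀ n)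
      (ρ / p') ρ (d + 2) (p' * √(ρ / p') * (ρ / p') ^ j) := by
  intro σ' σ hσ' hσσ' hσ
  have hp' := hp.symm.pos
  have hχ : 1 < ρ / p' := (one_lt_div hp').2 hρ
  have hC := hvol.pos
  have hτ : 1 < √(ρ / p') := Real.lt_sqrt_of_sq_lt (by simpa using hχ)
  have hm : 0 < 1 - (√(ρ / p'))⁻¹ := sub_pos.2 (inv_lt_one_of_one_lt₀ hτ)
  set s := p' * √(ρ / p') * (ρ / p') ^ j with hs
  have h2α : 2 * (ε * s / (2 * p')) = ε * (√(ρ / p') * (ρ / p') ^ j) := by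
    rw [hs]
    field_simp
  have hstep := hu.avg_rpow_le hvol hiso hc hd hp hq hρq hρ.le hn hm
    (sub_le_self _ (by positivity))
    (h2α ▸ one_sub_inv_sqrt_le_abs_mul_zpow_sub_one hχ hε j) (by linarith) hσσ' (by linarith)
  have hs' : 2 * (ε * s / (2 * p')) * p' = ε * s := by field_simp
  have hsχ : 2 * (ε * s / (2 * p')) * ρ = ε * (s * (ρ / p')) := by field_simp
  have hα : (ε * s / (2 * p')) ^ 2 ≤ s ^ 2 := by
    rw [div_pow, mul_pow, ← sq_abs ε, hε, one_pow, one_mul]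
    exact div_le_self (sq_nonneg s) (by nlinarith [hp.symm.lt])
  rw [hs', hsχ] at hstep
  have hsum : 0 ≤ (#(X.ball x₀ n) : ℝ)⁻¹ * ∑ x ∈ X.ball x₀ (σ * n), u x ^ (ε * s) :=
    mul_nonneg (by positivity) (sum_nonneg fun x _ => Real.rpow_nonneg (hu.pos x).le _)
  rw [expMoment_mul_log_sub hu.pos, expMoment_mul_log_sub hu.pos,
    Real.mul_rpow (Real.exp_pos _).le hsum, ← Real.exp_mul, mul_left_comm (_ ^ ρ),
    neg_mul, mul_assoc (ε * a) s]
  have := X.one_le_contrast p q x₀ n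
  have := sub_pos.2 hσσ'
  have hK : 1 ≤ gainConst d C c q' ρ (1 - (√(ρ / p'))⁻¹) := one_le_gainConst hC.le
  have := hp'.trans hρ
  refine mul_le_mul_of_nonneg_left (hstep.trans ?_) (Real.exp_pos _).le
  gcongr

theorem PosHarmonicOn.exists_abs_log_sub_le (hvol : X.VolumeRegular d C)
    (hiso : X.RelIsoperimetric c) (hc : 0 < c) (hd : 2 ≤ d) (hp : p.HolderConjugate p')
    (hq : q.HolderConjugate q') (hρq : 1 / ρ = 1 - 2 / (d : ℝ) + 1 / q) (hρ : p' < ρ)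
    (hu : X.PosHarmonicOn (X.ball x₀ n) u) (hn : 8 ≤ n) :
    ∃ a, ∀ x ∈ X.ball x₀ (n / 2), |Real.log (u x) - a| ≤
      logConst d C c p' q' ρ * X.contrast p q x₀ n ^ harnackExponent p' ρ := by
  obtain ⟨a, ha⟩ := hu.exists_sum_abs_log_sub_le hvol hiso hc hp.lt.le hq.lt.le hn
  refine ⟨a, fun x hx => ?_⟩
  have hM := X.one_le_contrast p q x₀ n
  have hp' := hp.symm.pos
  have hχ : 1 < ρ / p' := (one_lt_div hp').2 hρ
  have hP : 1 ≤ poincareConst C c := by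
    have := hvol.pos
    exact le_add_of_nonneg_left (by positivity)
  have hK : 1 ≤ gainConst d C c q' ρ (1 - (√(ρ / p'))⁻¹) := one_le_gainConst hvol.pos.le
  have hball : ∀ {σ}, σ ≤ 1 → X.ball x₀ (σ * n) ⊆ X.ball x₀ n := fun hσ =>
    MetricGraph.ball_subset_ball x₀ (by nlinarith)
  have hbound : ∀ ε : ℝ, |ε| = 1 → ε * (Real.log (u x) - a) ≤
      logConst d C c p' q' ρ * X.contrast p q x₀ n ^ harnackExponent p' ρ := fun ε hε => by
    refine (le_bombieriGiustiConst_mul (D := fun σ => X.ball x₀ (σ * n)) (b := #(X.ball x₀ n))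
      (ℓ := fun x => ε * (Real.log (u x) - a))
      (fun σ' σ hσ => MetricGraph.ball_subset_ball x₀ (by gcongr))
      (by exact_mod_cast card_pos.2 ⟨x₀, MetricGraph.mem_ball_self x₀ (by linarith)⟩)
      (by exact_mod_cast card_le_card (hball (by norm_num)))
      (one_le_mul_of_one_le_of_one_le hK hM)
      (one_le_mul_of_one_le_of_one_le (by linarith : 1 ≤ 21 * poincareConst C c) hM) hχ
      (hp'.trans hρ) (by omega) (by positivity : 0 < p' * √(ρ / p'))
      (hu.gainOfIntegrability hvol hiso hc hd hp hq hρq hρ (by linarith) a hε)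
      (by simpa only [abs_mul, hε, one_mul] using ha)
      (by rwa [one_div_mul_eq_div])).trans_eq ?_
    rw [logConst, harnackExponent, Real.rpow_add (by positivity), Real.rpow_one,
      Real.mul_rpow (by positivity) (by positivity)]
    ring
  exact abs_le'.2 ⟨by simpa using hbound 1 abs_one, by simpa using hbound (-1) (by simp)⟩

theorem PosHarmonicOn.le_exp_harnackConst_mul (hvol : X.VolumeRegular d C)
    (hiso : X.RelIsoperimetric c) (hc : 0 < c) (hd : 2 ≤ d) (hp : p.HolderConjugate p')
    (hq : q.HolderConjugate q') (hρq : 1 / ρ = 1 - 2 / (d : ℝ) + 1 / q) (hρ : p' < ρ)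
    (hu : X.PosHarmonicOn (X.ball x₀ n) u) (hn : 1 ≤ n) (hx : x ∈ X.ball x₀ (n / 2))
    (hy : y ∈ X.ball x₀ (n / 2)) :
    u x ≤ Real.exp (harnackConst d C c p p' q q' ρ *
      X.contrast p q x₀ n ^ harnackExponent p' ρ) * u y := by
  have hC := hvol.pos
  have hM := X.one_le_contrast p q x₀ n
  have hle := (hu.pos y).le
  rcases le_total n 8 with hn8 | hn8
  · have hK : 8 * (C * 8 ^ d) ^ (1 / p + 1 / q) ≤ harnackConst d C c p p' q q' ρ :=
      le_max_right _ _
    have hMκ := Real.self_le_rpow_of_one_le hM (one_le_harnackExponent hp.symm.pos hρ)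
    refine (hu.le_exp_mul_of_le_eight hvol hp.pos hq.pos hn hn8 hx hy).trans ?_
    exact mul_le_mul_of_nonneg_right (Real.exp_le_exp.2 (mul_le_mul hK hMκ (by positivity)
      (hK.trans' (by positivity)))) hle
  · obtain ⟨a, ha⟩ := hu.exists_abs_log_sub_le hvol hiso hc hd hp hq hρq hρ hn8
    have hlog : Real.log (u x) ≤ harnackConst d C c p p' q q' ρ *
        X.contrast p q x₀ n ^ harnackExponent p' ρ + Real.log (u y) := by
      calc Real.log (u x)
          ≤ 2 * logConst d C c p' q' ρ * X.contrast p q x₀ n ^ harnackExponent p' ρ +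
              Real.log (u y) := by
            linarith [(abs_le.1 (ha x hx)).2, (abs_le.1 (ha y hy)).1]
        _ ≤ _ := by
            gcongr
            exact le_max_left _ _
    rwa [← Real.exp_le_exp, Real.exp_add, Real.exp_log (hu.pos x), Real.exp_log (hu.pos y)]
      at hlog

end WeightedGraph

end EllipticHarnack

open RCM in
/-- **Elliptic Harnack inequality.** -/
theorem elliptic_harnack_inequality
    (d : ℕ) (hd : 2 ≤ d) (Creg Criso : ℝ) (hCreg : 0 < Creg) (hCriso : 0 < Criso)
    (p q : ℝ) (hp : 1 < p) (hq : 1 < q) (hpq : 1 / p + 1 / q < 2 / (d : ℝ)) :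
    ∃ c₁ c₂ κ : ℝ, 0 < c₁ ∧ 0 < c₂ ∧ 0 < κ ∧
      ∀ (V : Type) (G : SimpleGraph V) (nbr : V → Finset V)
        (_ : ∀ x y, y ∈ nbr x ↔ G.Adj x y)
        (_ : Infinite V) (_ : G.Connected)
        (ball : V → ℝ → Finset V)
        (_ : ∀ (x : V) (r : ℝ) (y : V), y ∈ ball x r ↔ (G.dist x y : ℝ) ≤ r)
        (_ : ∀ (x : V) (r : ℝ), 1 ≤ r →
              Creg⁻¹ * r ^ d ≤ ((ball x r).card : ℝ) ∧ ((ball x r).card : ℝ) ≤ Creg * r ^ d)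
        (_ : ∀ (x : V) (r : ℝ) (A : Finset V), 1 ≤ r → A.Nonempty → A ⊆ ball x r →
              (A.card : ℝ) < ((ball x r).card : ℝ) / 2 →
              Criso / r ≤ ((RCM.relBdry G (ball x r) A).card : ℝ) / (A.card : ℝ))
        (ω : V → V → ℝ)
        (_ : ∀ x y, ω x y = ω y x)
        (_ : ∀ x y, G.Adj x y → 0 < ω x y)
        (_ : ∀ x y, ¬ G.Adj x y → ω x y = 0)
        (x₀ : V) (n : ℝ) (_ : 1 ≤ n)
        (u : V → ℝ) (_ : ∀ x, 0 < u x)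
        (_ : ∀ x ∈ ball x₀ n, lap nbr ω u x = 0),
        ∀ x ∈ ball x₀ (n / 2), ∀ y ∈ ball x₀ (n / 2),
          u x ≤ c₁ * Real.exp (c₂ *
              (max 1 (nrm (ball x₀ n) p (mu nbr ω) * nrm (ball x₀ n) q (nu nbr ω))) ^ κ)
            * u y := by
  have hρ : 0 < 1 - 2 / (d : ℝ) + 1 / q := by
    have : 2 / (d : ℝ) ≤ 1 := (div_le_one₀ (by positivity)).2 (by exact_mod_cast hd)
    have : 0 < 1 / q := by positivity
    linarith
  set ρ := (1 - 2 / (d : ℝ) + 1 / q)⁻¹ with hρ_def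
  have hρq : 1 / ρ = 1 - 2 / (d : ℝ) + 1 / q := by rw [hρ_def, one_div, inv_inv]
  have hp' := Real.HolderConjugate.conjExponent hp
  have hq' := Real.HolderConjugate.conjExponent hq
  have hp'ρ : p.conjExponent < ρ := by
    refine lt_of_one_div_lt_one_div (inv_pos.2 hρ) ?_
    rw [hρq]
    linarith [hp'.one_div_add_one_div]
  refine ⟨1, EllipticHarnack.harnackConst d Creg Criso p p.conjExponent q q.conjExponent ρ,
    EllipticHarnack.harnackExponent p.conjExponent ρ, one_pos, lt_max_of_lt_right (by positivity),
    one_pos.trans_le (EllipticHarnack.one_le_harnackExponent hp'.symm.pos hp'ρ), ?_⟩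
  intro V G nbr hnbr _ hconn ball hball hvol hiso ω hsymm hpos hzero x₀ n hn u hu hharm x hx y hy
  rw [one_mul]
  exact EllipticHarnack.WeightedGraph.PosHarmonicOn.le_exp_harnackConst_mul
    (X := ⟨⟨G, nbr, hnbr, hconn, ball, hball⟩, ω, hsymm, hpos, hzero⟩)
    hvol hiso hCriso hd hp' hq' hρq hp'ρ ⟨hu, hharm⟩ hn hx hy
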